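/- arXiv:2306.17813 — 3 statements merged into one kernel-verified Lean document; each statement's English description precedes it below -/
import Mathlib

section
/- Let n ∈ ℕ and let a₁, …, aₙ be positive real numbers. Suppose that either aᵢ ≥ 1 for all 1 ≤ i ≤ n, or a₁ + ⋯ + aₙ < 1. Then for (Lebesgue) almost every α > n + 1, the equation y = a₁x₁ + ⋯ + aₙxₙ has at most finitely many non-trivial solutions (y, x₁, …, xₙ) ∈ PS(α)^{n+1}. -/
/-!
Write a solution as `y = ⌊m ^ α⌋`, `xᵢ = ⌊kᵢ ^ α⌋`. Removing the integer parts and dividing by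
`m ^ α` shows that `F(α) = ∑ aᵢ (kᵢ / m) ^ α` lies within `O(m ^ (-α))` of `1`. For fixed `m` and
`k` this confines `α` to a short interval, because `F` is steep wherever it is close to `1`:

* if all `aᵢ ≥ 1`, a non-trivial solution has `kᵢ < m` for all `i`, and then the logarithmic
  derivative of `F` is at most `-min (1 - kᵢ / m)`;
* if `∑ aᵢ < 1`, then `F` is convex with `F(0) = ∑ aᵢ < 1`, so its slope is at least
  `(F - ∑ aᵢ) / α`.

Only `O(m ^ n)` tuples `k` are possible for a given `m`. Hence the parameters `α ∈ [c, d]`, with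
`c > n + 1`, that have a solution with a given `m` form a set of measure `O(m ^ (n - c) log m)`.
This is summable over `m`, and the Borel–Cantelli lemma applies.
-/

open MeasureTheory

/-- The Piatetski–Shapiro set `PS(α) = {⌊n^α⌋ : n ∈ ℕ, n ≥ 1}`. -/
def PS (α : ℝ) : Set ℤ := {m : ℤ | ∃ n : ℕ, 1 ≤ n ∧ m = ⌊(n : ℝ) ^ α⌋}

section Measure

lemma volume_le_ofReal_of_sub_le {s : Set ℝ} {D : ℝ}
    (h : ∀ x ∈ s, ∀ y ∈ s, x ≤ y → y - x ≤ D) : volume s ≤ ENNReal.ofReal D := by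
  refine (Real.volume_le_diam s).trans (Metric.ediam_le_of_forall_dist_le fun x hx y hy => ?_)
  rw [Real.dist_eq]
  rcases le_total x y with hxy | hyx
  · rw [abs_sub_comm, abs_of_nonneg (sub_nonneg.2 hxy)]
    exact h x hx y hy hxy
  · rw [abs_of_nonneg (sub_nonneg.2 hyx)]
    exact h y hy x hx hyx

lemma measure_frequently_mem_eq_zero_of_eventually_le {X : Type*} [MeasurableSpace X]
    {μ : Measure X} {s : ℕ → Set X} {u : ℕ → ℝ} (hu : Summable u)
    (h : ∀ᶠ m in Filter.atTop, μ (s m) ≤ ENNReal.ofReal (u m)) :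
    μ {x | ∃ᶠ m in Filter.atTop, x ∈ s m} = 0 := by
  obtain ⟨N, hN⟩ := Filter.eventually_atTop.1 h
  have htail : ∑' m, μ (s (m + N)) ≠ ⊤ :=
    ne_top_of_le_ne_top ((summable_nat_add_iff N).2 hu).tsum_ofReal_ne_top
      (ENNReal.tsum_le_tsum fun m => hN _ (Nat.le_add_left N m))
  rw [← Filter.map_add_atTop_eq_nat N]
  exact measure_setOfPred_frequently_eq_zero htail

end Measure

section RealEstimates

lemma eventually_mul_rpow_neg_le (A : ℝ) {c ε : ℝ} (hc : 0 < c) (hε : 0 < ε) :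
    ∀ᶠ m : ℕ in Filter.atTop, A * (m : ℝ) ^ (-c) ≤ ε := by
  have h := ((tendsto_rpow_neg_atTop hc).comp tendsto_natCast_atTop_atTop).const_mul A
  rw [mul_zero] at h
  exact h.eventually (ge_mem_nhds hε)

lemma sub_mul_one_sub_mul_rpow_le {x α β : ℝ} (hx : 0 < x) (hαβ : α ≤ β) :
    (β - α) * (1 - x) * x ^ β ≤ x ^ α - x ^ β := by
  have hlog : (β - α) * Real.log x ≤ (β - α) * (x - 1) :=
    mul_le_mul_of_nonneg_left (Real.log_le_sub_one_of_pos hx) (sub_nonneg.2 hαβ)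
  have hexp : 1 + (β - α) * (1 - x) ≤ x ^ (α - β) := by
    rw [Real.rpow_def_of_pos hx]
    linarith [Real.add_one_le_exp (Real.log x * (α - β))]
  have hsplit : x ^ α = x ^ β * x ^ (α - β) := by
    rw [← Real.rpow_add hx, add_sub_cancel]
  linarith [mul_le_mul_of_nonneg_left hexp (Real.rpow_pos_of_pos hx β).le]

lemma one_add_log_le_mul_rpow {x δ : ℝ} (hx : 1 ≤ x) (hδ : 0 < δ) :
    1 + Real.log x ≤ (1 + 1 / δ) * x ^ δ := by
  calc 1 + Real.log x ≤ x ^ δ + x ^ δ / δ :=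
        add_le_add (Real.one_le_rpow hx hδ.le) (Real.log_le_rpow_div (zero_le_one.trans hx) hδ)
    _ = (1 + 1 / δ) * x ^ δ := by ring

lemma sum_Ico_inv_one_sub_div_le (m : ℕ) :
    ∑ b ∈ Finset.Ico 1 m, (1 - (b : ℝ) / m)⁻¹ ≤ m * (1 + Real.log m) := by
  have hterm : ∀ b ∈ Finset.Ico 1 m, (1 - (b : ℝ) / m)⁻¹ = m * ((m - b : ℕ) : ℝ)⁻¹ := by
    intro b hb
    have hbm := (Finset.mem_Ico.1 hb).2
    have hm : (m : ℝ) ≠ 0 := by exact_mod_cast (Nat.zero_lt_of_lt hbm).ne'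
    rw [Nat.cast_sub hbm.le, one_sub_div hm, inv_div, div_eq_mul_inv]
  rw [Finset.sum_congr rfl hterm, ← Finset.mul_sum,
    Finset.sum_Ico_reflect (fun j : ℕ => (j : ℝ)⁻¹) 1 m.le_succ, Nat.add_sub_cancel_left]
  gcongr
  calc ∑ j ∈ Finset.Ico 1 m, (j : ℝ)⁻¹ ≤ ∑ j ∈ Finset.Icc 1 m, (j : ℝ)⁻¹ :=
        Finset.sum_le_sum_of_subset_of_nonneg Finset.Ico_subset_Icc_self
          fun j _ _ => inv_nonneg.2 j.cast_nonneg
    _ = harmonic m := by rw [harmonic_eq_sum_Icc]; push_cast; rfl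
    _ ≤ 1 + Real.log m := harmonic_le_one_add_log m

lemma exists_nat_forall_le_mul {ι : Type*} [Finite ι] {a : ι → ℝ} (ha : ∀ i, 0 < a i) (b : ℝ) :
    ∃ M : ℕ, ∀ i, b ≤ a i * M := by
  obtain ⟨B, hB⟩ := (Set.finite_range fun i => b / a i).bddAbove
  obtain ⟨M, hBM⟩ := exists_nat_ge B
  exact ⟨M, fun i => (div_le_iff₀' (ha i)).1 ((hB (Set.mem_range_self i)).trans hBM)⟩

end RealEstimates

variable {ι : Type*} [Fintype ι] {a : ι → ℝ} {c d α β : ℝ}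

section WeightedPowerSum

/-- The exponential sum `∑ aᵢ xᵢ ^ α`, viewed as a function of the exponent `α`. -/
noncomputable def weightedPowerSum (a x : ι → ℝ) (α : ℝ) : ℝ :=
  ∑ i, a i * x i ^ α

/-- The exponents in `[c, d]` at which `weightedPowerSum a x` is within `ε` of `1`. A solution
of the equation with exponent `α` places `α` in such a set. -/
def nearOneSet (a x : ι → ℝ) (c d ε : ℝ) : Set ℝ :=
  {α ∈ Set.Icc c d | |weightedPowerSum a x α - 1| ≤ ε}

variable {x : ι → ℝ} {ε : ℝ}

lemma sub_mul_weightedPowerSum_le {D : ℝ} (ha : ∀ i, 0 ≤ a i) (hx : ∀ i, 0 < x i) (hD : 0 ≤ D)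
    (hxD : ∀ i, 1 ≤ D * (1 - x i)) (hαβ : α ≤ β) :
    (β - α) * weightedPowerSum a x β ≤ D * (weightedPowerSum a x α - weightedPowerSum a x β) := by
  simp only [weightedPowerSum, ← Finset.sum_sub_distrib, Finset.mul_sum]
  refine Finset.sum_le_sum fun i _ => ?_
  have hterm : (β - α) * x i ^ β ≤ D * (x i ^ α - x i ^ β) := by
    calc (β - α) * x i ^ β ≤ D * (1 - x i) * ((β - α) * x i ^ β) :=
          le_mul_of_one_le_left
            (mul_nonneg (sub_nonneg.2 hαβ) (Real.rpow_nonneg (hx i).le β)) (hxD i)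
      _ = D * ((β - α) * (1 - x i) * x i ^ β) := by ring
      _ ≤ D * (x i ^ α - x i ^ β) :=
          mul_le_mul_of_nonneg_left (sub_mul_one_sub_mul_rpow_le (hx i) hαβ) hD
  linarith [mul_le_mul_of_nonneg_left hterm (ha i)]

lemma volume_nearOneSet_le_of_base_lt_one (ha : ∀ i, 0 ≤ a i) (hx0 : ∀ i, 0 < x i)
    (hx1 : ∀ i, x i < 1) (hε : ε ≤ 1 / 2) :
    volume (nearOneSet a x c d ε) ≤ ENNReal.ofReal (4 * ε * ∑ i, (1 - x i)⁻¹) := by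
  have hinv : ∀ i, 0 < (1 - x i)⁻¹ := fun i => inv_pos.2 (sub_pos.2 (hx1 i))
  set D := ∑ i, (1 - x i)⁻¹
  have hD : 0 ≤ D := Finset.sum_nonneg fun i _ => (hinv i).le
  have hxD : ∀ i, 1 ≤ D * (1 - x i) := fun i => by
    rw [← inv_le_iff_one_le_mul₀ (sub_pos.2 (hx1 i))]
    exact Finset.single_le_sum (fun j _ => (hinv j).le) (Finset.mem_univ i)
  refine volume_le_ofReal_of_sub_le fun α hα β hβ hαβ => ?_
  have hFα := abs_le.1 hα.2
  have hFβ := abs_le.1 hβ.2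
  have hhalf : (β - α) * (1 / 2) ≤ (β - α) * weightedPowerSum a x β :=
    mul_le_mul_of_nonneg_left (by linarith) (sub_nonneg.2 hαβ)
  have hdrop : D * (weightedPowerSum a x α - weightedPowerSum a x β) ≤ D * (2 * ε) :=
    mul_le_mul_of_nonneg_left (by linarith) hD
  linarith [sub_mul_weightedPowerSum_le ha hx0 hD hxD hαβ]

lemma convexOn_weightedPowerSum (ha : ∀ i, 0 ≤ a i) (hx : ∀ i, 0 < x i) :
    ConvexOn ℝ Set.univ (weightedPowerSum a x) := by
  refine ⟨convex_univ, fun α hα β hβ s t hs ht hst => ?_⟩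
  simp only [weightedPowerSum, Finset.smul_sum, ← Finset.sum_add_distrib]
  exact Finset.sum_le_sum fun i _ =>
    ((convexOn_rpow_left (hx i)).smul (ha i)).2 hα hβ hs ht hst

lemma sub_mul_weightedPowerSum_sub_sum_le (ha : ∀ i, 0 ≤ a i) (hx : ∀ i, 0 < x i) (hα : 0 < α)
    (hαβ : α ≤ β) : (β - α) * (weightedPowerSum a x α - ∑ i, a i) ≤
      α * (weightedPowerSum a x β - weightedPowerSum a x α) := by
  rcases hαβ.eq_or_lt with rfl | hlt
  · simp
  have hzero : weightedPowerSum a x 0 = ∑ i, a i := by simp [weightedPowerSum]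
  have hslope := (convexOn_weightedPowerSum ha hx).slope_mono_adjacent
    (Set.mem_univ 0) (Set.mem_univ β) hα hlt
  rw [hzero, sub_zero, div_le_div_iff₀ hα (sub_pos.2 hlt)] at hslope
  linarith

lemma volume_nearOneSet_le_of_sum_lt_one (ha : ∀ i, 0 ≤ a i) (hx : ∀ i, 0 < x i)
    (hsum : ∑ i, a i < 1) (hc : 0 < c) (hε : ε ≤ (1 - ∑ i, a i) / 2) :
    volume (nearOneSet a x c d ε) ≤ ENNReal.ofReal (4 * ε * d / (1 - ∑ i, a i)) := by
  refine volume_le_ofReal_of_sub_le fun α hα β hβ hαβ => ?_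
  have hα0 : 0 < α := hc.trans_le hα.1.1
  have hε0 : 0 ≤ ε := (abs_nonneg _).trans hα.2
  have hFα := abs_le.1 hα.2
  have hFβ := abs_le.1 hβ.2
  have hgap : (β - α) * ((1 - ∑ i, a i) / 2) ≤ (β - α) * (weightedPowerSum a x α - ∑ i, a i) :=
    mul_le_mul_of_nonneg_left (by linarith) (sub_nonneg.2 hαβ)
  have hrise : α * (weightedPowerSum a x β - weightedPowerSum a x α) ≤ d * (2 * ε) :=
    (mul_le_mul_of_nonneg_left (by linarith) hα0.le).trans
      (mul_le_mul_of_nonneg_right hα.1.2 (by linarith))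
  rw [le_div_iff₀ (sub_pos.2 hsum)]
  linarith [sub_mul_weightedPowerSum_sub_sum_le ha hx hα0 hαβ]

end WeightedPowerSum

section Solutions

/-- The non-trivial solutions `(y, x)` of `y = ∑ aᵢ xᵢ` in the Piatetski–Shapiro set `PS α`. -/
def nontrivialSolutions (a : ι → ℝ) (α : ℝ) : Set (ℤ × (ι → ℤ)) :=
  {sol | sol.1 ∈ PS α ∧ (∀ i, sol.2 i ∈ PS α) ∧ (sol.1 : ℝ) = ∑ i, a i * (sol.2 i : ℝ) ∧
    ¬(∑ i, a i = 1 ∧ ∀ i, sol.2 i = sol.1)}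

/-- The positive integers `m` and `kᵢ` are bases of a non-trivial solution: `y = ⌊m ^ α⌋` and
`xᵢ = ⌊kᵢ ^ α⌋` solve `y = ∑ aᵢ xᵢ`. -/
structure IsSolutionBase (a : ι → ℝ) (α : ℝ) (m : ℕ) (k : ι → ℕ) : Prop where
  one_le : 1 ≤ m
  one_le_apply : ∀ i, 1 ≤ k i
  floor_eq_sum : (⌊(m : ℝ) ^ α⌋ : ℝ) = ∑ i, a i * (⌊(k i : ℝ) ^ α⌋ : ℝ)
  nontrivial : ¬(∑ i, a i = 1 ∧ ∀ i, ⌊(k i : ℝ) ^ α⌋ = ⌊(m : ℝ) ^ α⌋)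

variable {m : ℕ} {k : ι → ℕ}

lemma one_le_floor_rpow {b : ℕ} (hb : 1 ≤ b) (hα : 0 ≤ α) : 1 ≤ ⌊(b : ℝ) ^ α⌋ := by
  rw [Int.le_floor, Int.cast_one]
  exact Real.one_le_rpow (by exact_mod_cast hb) hα

lemma floor_rpow_mono {b b' : ℕ} (hb : b ≤ b') (hα : 0 ≤ α) :
    ⌊(b : ℝ) ^ α⌋ ≤ ⌊(b' : ℝ) ^ α⌋ :=
  Int.floor_le_floor (Real.rpow_le_rpow b.cast_nonneg (by exact_mod_cast hb) hα)

lemma exists_isSolutionBase {sol : ℤ × (ι → ℤ)} (h : sol ∈ nontrivialSolutions a α) :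
    ∃ m k, IsSolutionBase a α m k ∧ sol = (⌊(m : ℝ) ^ α⌋, fun i => ⌊(k i : ℝ) ^ α⌋) := by
  obtain ⟨y, x⟩ := sol
  obtain ⟨⟨m, hm, rfl⟩, hx, heq, hne⟩ := h
  choose k hk hxk using hx
  obtain rfl : x = fun i => ⌊(k i : ℝ) ^ α⌋ := funext hxk
  exact ⟨m, k, ⟨hm, hk, heq, hne⟩, rfl⟩

lemma finite_setOf_eq_sum_of_le (ha : ∀ i, 0 < a i) (B : ℤ) :
    {sol : ℤ × (ι → ℤ) | (sol.1 ∈ Set.Icc 0 B ∧ ∀ i, 0 ≤ sol.2 i) ∧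
      (sol.1 : ℝ) = ∑ i, a i * (sol.2 i : ℝ)}.Finite := by
  refine ((Set.finite_Icc 0 B).prod
    (Set.Finite.pi fun i => Set.finite_Icc 0 ⌊(B : ℝ) / a i⌋)).subset ?_
  rintro ⟨y, x⟩ ⟨⟨hy, hx⟩, heq⟩
  refine ⟨hy, fun i _ => ⟨hx i, Int.le_floor.2 ?_⟩⟩
  rw [le_div_iff₀ (ha i), mul_comm]
  calc a i * (x i : ℝ) ≤ ∑ j, a j * (x j : ℝ) :=
        Finset.single_le_sum (f := fun j => a j * (x j : ℝ))
          (fun j _ => mul_nonneg (ha j).le (Int.cast_nonneg (hx j))) (Finset.mem_univ i)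
    _ = y := heq.symm
    _ ≤ B := by exact_mod_cast hy.2

lemma frequently_exists_isSolutionBase (ha : ∀ i, 0 < a i) (hα : 0 ≤ α)
    (h : (nontrivialSolutions a α).Infinite) :
    ∃ᶠ m in Filter.atTop, ∃ k, IsSolutionBase a α m k := by
  refine Filter.frequently_atTop.2 fun N => ?_
  by_contra! hlt
  refine h ((finite_setOf_eq_sum_of_le ha ⌊(N : ℝ) ^ α⌋).subset fun sol hsol => ?_)
  obtain ⟨m, k, hmk, rfl⟩ := exists_isSolutionBase hsol
  have hmN : m ≤ N := le_of_not_ge fun hNm => hlt m hNm k hmk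
  exact ⟨⟨⟨zero_le_one.trans (one_le_floor_rpow hmk.one_le hα), floor_rpow_mono hmN hα⟩,
    fun i => zero_le_one.trans (one_le_floor_rpow (hmk.one_le_apply i) hα)⟩, hmk.floor_eq_sum⟩

lemma abs_sum_sub_le_of_floor_eq {y : ℝ} {x : ι → ℝ} (ha : ∀ i, 0 ≤ a i)
    (h : (⌊y⌋ : ℝ) = ∑ i, a i * (⌊x i⌋ : ℝ)) : |∑ i, a i * x i - y| ≤ 1 + ∑ i, a i := by
  have hlower : ∑ i, a i * (⌊x i⌋ : ℝ) ≤ ∑ i, a i * x i :=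
    Finset.sum_le_sum fun i _ => mul_le_mul_of_nonneg_left (Int.floor_le _) (ha i)
  have hupper : ∑ i, a i * x i ≤ ∑ i, a i * (⌊x i⌋ : ℝ) + ∑ i, a i := by
    rw [← Finset.sum_add_distrib]
    refine Finset.sum_le_sum fun i _ => ?_
    linarith [mul_le_mul_of_nonneg_left (Int.lt_floor_add_one (x i)).le (ha i)]
  refine abs_le.2 ⟨?_, ?_⟩
  · linarith [Int.lt_floor_add_one y, Finset.sum_nonneg fun i (_ : i ∈ Finset.univ) => ha i]
  · linarith [Int.floor_le y]

lemma weightedPowerSum_div_sub_one {y : ℝ} {x : ι → ℝ} (hy : 0 < y) (hx : ∀ i, 0 ≤ x i) :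
    weightedPowerSum a (fun i => x i / y) α - 1 =
      (∑ i, a i * x i ^ α - y ^ α) * y ^ (-α) := by
  have hyα : y ^ α ≠ 0 := (Real.rpow_pos_of_pos hy α).ne'
  rw [Real.rpow_neg hy.le, sub_mul, mul_inv_cancel₀ hyα, Finset.sum_mul, weightedPowerSum]
  congr 1
  refine Finset.sum_congr rfl fun i _ => ?_
  rw [Real.div_rpow (hx i) hy.le, div_eq_mul_inv, mul_assoc]

lemma IsSolutionBase.mem_nearOneSet (h : IsSolutionBase a α m k) (ha : ∀ i, 0 ≤ a i)
    (hα : α ∈ Set.Icc c d) :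
    α ∈ nearOneSet a (fun i => (k i : ℝ) / m) c d ((1 + ∑ i, a i) * (m : ℝ) ^ (-c)) := by
  have hm : (1 : ℝ) ≤ m := by exact_mod_cast h.one_le
  have hm0 : (0 : ℝ) < m := zero_lt_one.trans_le hm
  refine ⟨hα, ?_⟩
  rw [weightedPowerSum_div_sub_one hm0 fun i => (k i).cast_nonneg, abs_mul,
    abs_of_pos (Real.rpow_pos_of_pos hm0 (-α))]
  exact mul_le_mul (abs_sum_sub_le_of_floor_eq ha h.floor_eq_sum)
    (Real.rpow_le_rpow_of_exponent_le hm (neg_le_neg hα.1)) (Real.rpow_nonneg hm0.le _)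
    (add_nonneg zero_le_one (Finset.sum_nonneg fun i _ => ha i))

lemma volume_infinite_nontrivialSolutions_eq_zero (ha : ∀ i, 0 < a i) (hc : 0 ≤ c)
    {T : ℕ → Finset (ι → ℕ)} {u : ℕ → ℝ} (hu : Summable u)
    (hT : ∀ α ∈ Set.Icc c d, ∀ m k, IsSolutionBase a α m k → k ∈ T m)
    (hvol : ∀ᶠ m in Filter.atTop, ∑ k ∈ T m, volume (nearOneSet a (fun i => (k i : ℝ) / m) c d
      ((1 + ∑ i, a i) * (m : ℝ) ^ (-c))) ≤ ENNReal.ofReal (u m)) :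
    volume {α ∈ Set.Icc c d | (nontrivialSolutions a α).Infinite} = 0 := by
  refine measure_mono_null ?_ (measure_frequently_mem_eq_zero_of_eventually_le hu
    (hvol.mono fun m hm => (measure_biUnion_finset_le (T m) _).trans hm))
  rintro α ⟨hα, hinf⟩
  refine (frequently_exists_isSolutionBase ha (hc.trans hα.1) hinf).mono ?_
  rintro m ⟨k, hk⟩
  exact Set.mem_biUnion (hT α hα m k hk) (hk.mem_nearOneSet (fun i => (ha i).le) hα)

end Solutions

section CoefficientsAtLeastOne

lemma sum_eq_one_and_forall_eq_of_le {y : ℝ} {x : ι → ℝ} (ha : ∀ i, 1 ≤ a i) (hx : ∀ i, 0 < x i)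
    (heq : y = ∑ i, a i * x i) {j : ι} (hj : y ≤ x j) : ∑ i, a i = 1 ∧ ∀ i, x i = y := by
  have hpos : ∀ i, 0 < a i * x i := fun i => mul_pos (zero_lt_one.trans_le (ha i)) (hx i)
  have hxj : x j ≤ a j * x j := le_mul_of_one_le_left (hx j).le (ha j)
  have hunique : ∀ i, i = j := by
    by_contra! hne
    obtain ⟨i, hij⟩ := hne
    have hpair := Finset.add_le_sum (fun i _ => (hpos i).le) (Finset.mem_univ i)
      (Finset.mem_univ j) hij
    linarith [hpos i]
  have hsum : ∀ f : ι → ℝ, ∑ i, f i = f j := fun f =>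
    Fintype.sum_eq_single j fun i hij => (hij (hunique i)).elim
  rw [hsum] at heq
  have haj : a j = 1 := le_antisymm (le_of_mul_le_mul_right (by linarith) (hx j)) (ha j)
  refine ⟨(hsum a).trans haj, fun i => ?_⟩
  rw [hunique i, heq, haj, one_mul]

lemma IsSolutionBase.apply_lt {m : ℕ} {k : ι → ℕ} (h : IsSolutionBase a α m k)
    (ha : ∀ i, 1 ≤ a i) (hα : 0 ≤ α) (i : ι) : k i < m := by
  by_contra! hmk
  obtain ⟨hsum, hfloor⟩ := sum_eq_one_and_forall_eq_of_le ha
    (fun j => Int.cast_pos.2 (one_le_floor_rpow (h.one_le_apply j) hα)) h.floor_eq_sum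
    (Int.cast_le.2 (floor_rpow_mono hmk hα))
  exact h.nontrivial ⟨hsum, fun j => by exact_mod_cast hfloor j⟩

lemma sum_piFinset_sum_inv_one_sub_div_le [DecidableEq ι] (m : ℕ) :
    ∑ k ∈ Fintype.piFinset fun _ : ι => Finset.Ico 1 m, ∑ i, (1 - (k i : ℝ) / m)⁻¹ ≤
      Fintype.card ι * ((m : ℝ) ^ Fintype.card ι * (1 + Real.log m)) := by
  have hcoord : ∀ i : ι, ∑ k ∈ Fintype.piFinset fun _ : ι => Finset.Ico 1 m,
      (1 - (k i : ℝ) / m)⁻¹ ≤ (m : ℝ) ^ Fintype.card ι * (1 + Real.log m) := by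
    intro i
    have hcard : Fintype.card ι - 1 + 1 = Fintype.card ι :=
      Nat.sub_add_cancel (Fintype.card_pos_iff.2 ⟨i⟩)
    rw [Fintype.sum_piFinset_apply (fun b : ℕ => (1 - (b : ℝ) / m)⁻¹), Nat.card_Ico, nsmul_eq_mul,
      Nat.cast_pow]
    calc ((m - 1 : ℕ) : ℝ) ^ (Fintype.card ι - 1) * ∑ b ∈ Finset.Ico 1 m, (1 - (b : ℝ) / m)⁻¹
        ≤ ((m - 1 : ℕ) : ℝ) ^ (Fintype.card ι - 1) * (m * (1 + Real.log m)) := by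
          gcongr
          exact sum_Ico_inv_one_sub_div_le m
      _ ≤ (m : ℝ) ^ (Fintype.card ι - 1) * (m * (1 + Real.log m)) := by
          gcongr
          exact Nat.sub_le m 1
      _ = (m : ℝ) ^ Fintype.card ι * (1 + Real.log m) := by
          rw [← mul_assoc, ← pow_succ, hcard]
  rw [Finset.sum_comm]
  simpa using Finset.sum_le_sum fun i (_ : i ∈ Finset.univ) => hcoord i

lemma sum_volume_nearOneSet_le_of_base_lt_one [DecidableEq ι] (m : ℕ) {ε : ℝ}
    (ha : ∀ i, 0 ≤ a i) (hε0 : 0 ≤ ε) (hε : ε ≤ 1 / 2) :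
    ∑ k ∈ Fintype.piFinset fun _ : ι => Finset.Ico 1 m,
        volume (nearOneSet a (fun i => (k i : ℝ) / m) c d ε) ≤
      ENNReal.ofReal
        (4 * ε * (Fintype.card ι * ((m : ℝ) ^ Fintype.card ι * (1 + Real.log m)))) := by
  have hbase : ∀ k ∈ Fintype.piFinset fun _ : ι => Finset.Ico 1 m, ∀ i,
      0 < (k i : ℝ) / m ∧ (k i : ℝ) / m < 1 := by
    intro k hk i
    obtain ⟨hk1, hkm⟩ := Finset.mem_Ico.1 (Fintype.mem_piFinset.1 hk i)
    have hm0 : (0 : ℝ) < m := by exact_mod_cast Nat.zero_lt_of_lt hkm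
    exact ⟨div_pos (by exact_mod_cast hk1) hm0, (div_lt_one hm0).2 (by exact_mod_cast hkm)⟩
  refine (Finset.sum_le_sum fun k hk => volume_nearOneSet_le_of_base_lt_one ha
    (fun i => (hbase k hk i).1) (fun i => (hbase k hk i).2) hε).trans ?_
  rw [← ENNReal.ofReal_sum_of_nonneg fun k hk => mul_nonneg (by positivity)
    (Finset.sum_nonneg fun i _ => inv_nonneg.2 (sub_nonneg.2 (hbase k hk i).2.le)),
    ← Finset.mul_sum]
  exact ENNReal.ofReal_le_ofReal
    (mul_le_mul_of_nonneg_left (sum_piFinset_sum_inv_one_sub_div_le m) (by positivity))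

lemma volume_infinite_nontrivialSolutions_of_one_le (ha : ∀ i, 1 ≤ a i)
    (hc : (Fintype.card ι : ℝ) + 1 < c) :
    volume {α ∈ Set.Icc c d | (nontrivialSolutions a α).Infinite} = 0 := by
  classical
  have ha0 : ∀ i, 0 < a i := fun i => zero_lt_one.trans_le (ha i)
  have hc0 : 0 < c := by linarith [(Fintype.card ι).cast_nonneg (α := ℝ)]
  set n := Fintype.card ι
  set A := 1 + ∑ i, a i
  have hA : 0 < A := add_pos_of_pos_of_nonneg one_pos (Finset.sum_nonneg fun i _ => (ha0 i).le)
  set δ := (c - n - 1) / 2 with hδ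
  have hδ0 : 0 < δ := by linarith
  refine volume_infinite_nontrivialSolutions_eq_zero ha0 hc0.le
    (T := fun m => Fintype.piFinset fun _ => Finset.Ico 1 m)
    ((Real.summable_nat_rpow.2 (show -(1 + δ) < -1 by linarith)).mul_left
      (4 * A * n * (1 + 1 / δ))) (fun α hα m k hmk => ?_) ?_
  · exact Fintype.mem_piFinset.2 fun i => Finset.mem_Ico.2
      ⟨hmk.one_le_apply i, hmk.apply_lt ha (hc0.le.trans hα.1) i⟩
  filter_upwards [eventually_mul_rpow_neg_le A hc0 one_half_pos, Filter.eventually_ge_atTop 1]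
    with m hε hm
  have hm1 : (1 : ℝ) ≤ m := by exact_mod_cast hm
  have hm0 : (0 : ℝ) < m := zero_lt_one.trans_le hm1
  refine (sum_volume_nearOneSet_le_of_base_lt_one m (fun i => (ha0 i).le) (by positivity) hε).trans
    (ENNReal.ofReal_le_ofReal ?_)
  calc 4 * (A * (m : ℝ) ^ (-c)) * (n * ((m : ℝ) ^ n * (1 + Real.log m)))
      ≤ 4 * (A * (m : ℝ) ^ (-c)) * (n * ((m : ℝ) ^ n * ((1 + 1 / δ) * (m : ℝ) ^ δ))) := by
        gcongr
        exact one_add_log_le_mul_rpow hm1 hδ0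
    _ = 4 * A * n * (1 + 1 / δ) * ((m : ℝ) ^ (n : ℝ) * (m : ℝ) ^ (-c) * (m : ℝ) ^ δ) := by
        rw [Real.rpow_natCast]; ring
    _ = 4 * A * n * (1 + 1 / δ) * (m : ℝ) ^ (-(1 + δ)) := by
        rw [← Real.rpow_add hm0, ← Real.rpow_add hm0]
        congr 2
        linarith

end CoefficientsAtLeastOne

section CoefficientSumLtOne

lemma IsSolutionBase.apply_le {m M : ℕ} {k : ι → ℕ} (h : IsSolutionBase a α m k)
    (ha : ∀ i, 0 < a i) (hα : 1 ≤ α) {i : ι} (hM : 2 ≤ a i * M) : k i ≤ M * m := by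
  have hα0 : 0 < α := zero_lt_one.trans_le hα
  have hfloor : ∀ j, (1 : ℝ) ≤ ⌊(k j : ℝ) ^ α⌋ := fun j => by
    exact_mod_cast one_le_floor_rpow (h.one_le_apply j) hα0.le
  have hM1 : (1 : ℝ) ≤ M := by
    exact_mod_cast Nat.one_le_iff_ne_zero.2 (by rintro rfl; norm_num at hM)
  have hterm : a i * (⌊(k i : ℝ) ^ α⌋ : ℝ) ≤ (m : ℝ) ^ α := by
    calc a i * (⌊(k i : ℝ) ^ α⌋ : ℝ) ≤ ∑ j, a j * (⌊(k j : ℝ) ^ α⌋ : ℝ) :=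
          Finset.single_le_sum (f := fun j => a j * (⌊(k j : ℝ) ^ α⌋ : ℝ))
            (fun j _ => mul_nonneg (ha j).le (zero_le_one.trans (hfloor j))) (Finset.mem_univ i)
      _ = (⌊(m : ℝ) ^ α⌋ : ℝ) := h.floor_eq_sum.symm
      _ ≤ (m : ℝ) ^ α := Int.floor_le _
  have hpow : a i * (k i : ℝ) ^ α ≤ a i * ((M * m : ℕ) : ℝ) ^ α := by
    calc a i * (k i : ℝ) ^ α ≤ a i * (2 * (⌊(k i : ℝ) ^ α⌋ : ℝ)) :=
          mul_le_mul_of_nonneg_left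
            (by linarith [hfloor i, Int.lt_floor_add_one ((k i : ℝ) ^ α)]) (ha i).le
      _ ≤ 2 * (m : ℝ) ^ α := by linarith
      _ ≤ a i * M * (m : ℝ) ^ α := by gcongr
      _ ≤ a i * (M : ℝ) ^ α * (m : ℝ) ^ α := by
          gcongr
          · exact (ha i).le
          · exact Real.self_le_rpow_of_one_le hM1 hα
      _ = a i * ((M * m : ℕ) : ℝ) ^ α := by
          rw [Nat.cast_mul, Real.mul_rpow M.cast_nonneg m.cast_nonneg, mul_assoc]
  exact_mod_cast (Real.rpow_le_rpow_iff (k i).cast_nonneg (Nat.cast_nonneg _) hα0).1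
    (le_of_mul_le_mul_left hpow (ha i))

lemma sum_volume_nearOneSet_le_of_sum_lt_one [DecidableEq ι] {m : ℕ} {ε : ℝ} (hm : 1 ≤ m) (N : ℕ)
    (ha : ∀ i, 0 ≤ a i) (hsum : ∑ i, a i < 1) (hc : 0 < c) (hε : ε ≤ (1 - ∑ i, a i) / 2) :
    ∑ k ∈ Fintype.piFinset fun _ : ι => Finset.Icc 1 N,
        volume (nearOneSet a (fun i => (k i : ℝ) / m) c d ε) ≤
      ENNReal.ofReal ((N : ℝ) ^ Fintype.card ι * (4 * ε * d / (1 - ∑ i, a i))) := by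
  have hbase : ∀ k ∈ Fintype.piFinset fun _ : ι => Finset.Icc 1 N, ∀ i, 0 < (k i : ℝ) / m :=
    fun k hk i => div_pos
      (by exact_mod_cast (Finset.mem_Icc.1 (Fintype.mem_piFinset.1 hk i)).1) (by exact_mod_cast hm)
  refine (Finset.sum_le_sum fun k hk =>
    volume_nearOneSet_le_of_sum_lt_one ha (hbase k hk) hsum hc hε).trans_eq ?_
  rw [Finset.sum_const, Fintype.card_piFinset, Finset.prod_const, Nat.card_Icc, Nat.add_sub_cancel,
    Finset.card_univ, ← ENNReal.ofReal_nsmul, nsmul_eq_mul, Nat.cast_pow]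

lemma volume_infinite_nontrivialSolutions_of_sum_lt_one (ha : ∀ i, 0 < a i) (hsum : ∑ i, a i < 1)
    (hc : (Fintype.card ι : ℝ) + 1 < c) :
    volume {α ∈ Set.Icc c d | (nontrivialSolutions a α).Infinite} = 0 := by
  classical
  have hc1 : 1 < c := by linarith [(Fintype.card ι).cast_nonneg (α := ℝ)]
  have hc0 : 0 < c := zero_lt_one.trans hc1
  obtain ⟨M, hM⟩ := exists_nat_forall_le_mul ha 2
  set n := Fintype.card ι
  set A := 1 + ∑ i, a i
  refine volume_infinite_nontrivialSolutions_eq_zero ha hc0.le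
    (T := fun m => Fintype.piFinset fun _ => Finset.Icc 1 (M * m))
    ((Real.summable_nat_rpow.2 (show (n : ℝ) - c < -1 by linarith)).mul_left
      ((M : ℝ) ^ n * (4 * A * d / (1 - ∑ i, a i)))) (fun α hα m k hmk => ?_) ?_
  · exact Fintype.mem_piFinset.2 fun i => Finset.mem_Icc.2
      ⟨hmk.one_le_apply i, hmk.apply_le ha (hc1.le.trans hα.1) (hM i)⟩
  filter_upwards [eventually_mul_rpow_neg_le A hc0 (half_pos (sub_pos.2 hsum)),
    Filter.eventually_ge_atTop 1] with m hε hm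
  have hm0 : (0 : ℝ) < m := by exact_mod_cast hm
  refine (sum_volume_nearOneSet_le_of_sum_lt_one hm (M * m) (fun i => (ha i).le) hsum hc0
    hε).trans_eq ?_
  congr 1
  calc ((M * m : ℕ) : ℝ) ^ n * (4 * (A * (m : ℝ) ^ (-c)) * d / (1 - ∑ i, a i))
      = (M : ℝ) ^ n * (4 * A * d / (1 - ∑ i, a i)) * ((m : ℝ) ^ (n : ℝ) * (m : ℝ) ^ (-c)) := by
        rw [Real.rpow_natCast]; push_cast; ring
    _ = (M : ℝ) ^ n * (4 * A * d / (1 - ∑ i, a i)) * (m : ℝ) ^ ((n : ℝ) - c) := by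
        rw [← Real.rpow_add hm0, ← sub_eq_add_neg]

end CoefficientSumLtOne

/-- If all `aᵢ ≥ 1`, or `a₁ + ⋯ + aₙ < 1`, then for almost every `α > n + 1`,
the equation `y = a₁x₁ + ⋯ + aₙxₙ` has at most finitely many non-trivial solutions
`(y, x₁, …, xₙ) ∈ PS(α)^{n+1}` (a solution is trivial iff `a₁ + ⋯ + aₙ = 1` and
`y = x₁ = ⋯ = xₙ`). -/
theorem statement3 (n : ℕ) (hn : 1 ≤ n) (a : Fin n → ℝ) (ha : ∀ i, 0 < a i)
    (hcond : (∀ i, 1 ≤ a i) ∨ ∑ i, a i < 1) :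
    volume {α : ℝ | (n : ℝ) + 1 < α ∧
      {sol : ℤ × (Fin n → ℤ) |
        sol.1 ∈ PS α ∧ (∀ i, sol.2 i ∈ PS α) ∧
        (sol.1 : ℝ) = ∑ i, a i * (sol.2 i : ℝ) ∧
        ¬(∑ i, a i = 1 ∧ ∀ i, sol.2 i = sol.1)}.Infinite} = 0 := by
  refine measure_null_of_locally_null _ fun α hα => ?_
  obtain ⟨c, hnc, hcα⟩ := exists_between hα.1
  refine ⟨_, inter_mem_nhdsWithin _ (Icc_mem_nhds hcα (lt_add_one α)), ?_⟩
  have hc : (Fintype.card (Fin n) : ℝ) + 1 < c := by rwa [Fintype.card_fin]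
  have hnull : volume {β ∈ Set.Icc c (α + 1) | (nontrivialSolutions a β).Infinite} = 0 :=
    hcond.elim (fun h => volume_infinite_nontrivialSolutions_of_one_le h hc)
      (fun h => volume_infinite_nontrivialSolutions_of_sum_lt_one ha h hc)
  refine measure_mono_null ?_ hnull
  rintro β ⟨⟨-, hinf⟩, hβ⟩
  exact ⟨hβ, hinf⟩
end

section
/- Let n ∈ ℕ and let a₁, …, aₙ be positive real numbers. Then for all real s, t with 3n + 4 < s < t, the Hausdorff dimension of the set {α ∈ [s, t] : the equation y = a₁x₁ + ⋯ + aₙxₙ has infinitely many non-trivial solutions (y, x₁, …, xₙ) ∈ PS(α)^{n+1}} is at most 3n/(s − 4). -/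
open MeasureTheory

/-! Write `y = ⌊m ^ α⌋` and `xᵢ = ⌊kᵢ ^ α⌋`. For fixed bases `(m, k)`, dividing the equation by
`m ^ α` shows that `α` satisfies `∑ aᵢ (kᵢ / m) ^ α = 1 + O(m ^ (-s))`. The left-hand side is a
convex function of `α`, and non-triviality of the solution forces a positive proportion of its mass
onto indices with `kᵢ ≠ m`, where `|log (kᵢ / m)| ≫ 1 / m`. Its second differences of step `η` are
therefore `≫ (η / m) ^ 2`, so no three such `α` are separated by a large multiple of
`m ^ (1 - s / 2)`. For a single variable the logarithm of the left-hand side is affine in `α` with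
slope bounded away from `0`, which even confines `α` to an interval of length `O(m ^ (-s))`. Since
`kᵢ = O(m)`, there are `O(m ^ n)` tuples `k` for each `m`, and the Hausdorff–Cantelli lemma gives
the dimension bound. -/

section

open Filter Topology
open scoped ENNReal NNReal

/-! ### Hausdorff dimension of limsup sets -/

section HausdorffCantelli

variable {X : Type*} [EMetricSpace X]

lemma dimH_setOf_infinite_mem_le_of_tsum_ediam_rpow_ne_top {κ : Type*} [Countable κ]
    {T : κ → Set X} {d : ℝ≥0} (hd : 0 < d) (hT : ∑' i, Metric.ediam (T i) ^ (d : ℝ) ≠ ∞) :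
    dimH {x | {i | x ∈ T i}.Infinite} ≤ d := by
  borelize X
  have hd' : (0 : ℝ) < d := hd
  have htail := ENNReal.tendsto_tsum_compl_atTop_zero hT
  have hradius : Tendsto
      (fun F : Finset κ => (∑' i : {i // i ∉ F}, Metric.ediam (T i) ^ (d : ℝ)) ^ (d : ℝ)⁻¹)
      atTop (𝓝 0) := by
    simpa [hd] using htail.ennrpow_const (d : ℝ)⁻¹
  have hle := Measure.hausdorffMeasure_le_liminf_tsum (d : ℝ) {x | {i | x ∈ T i}.Infinite} _ hradius
    (fun F (i : {i // i ∉ F}) => T i)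
    (.of_forall fun F i => (ENNReal.le_rpow_inv_iff hd').2 <|
      ENNReal.le_tsum (f := fun i : {i // i ∉ F} => Metric.ediam (T i) ^ (d : ℝ)) i)
    (.of_forall fun F x hx => by
      obtain ⟨i, hi, hiF⟩ := Set.Infinite.exists_notMem_finset hx F
      exact Set.mem_iUnion.2 ⟨⟨i, hiF⟩, hi⟩)
  rw [htail.liminf_eq] at hle
  exact dimH_le_of_hausdorffMeasure_ne_top (hle.trans_lt ENNReal.zero_lt_top).ne

/-- The set `S` splits into two pieces of diameter at most `η`, the pieces being indexed by
`Bool`. -/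
def IsUnionOfTwoSmall (S : Set X) (η : ℝ≥0∞) : Prop :=
  ∃ P : Bool → Set X, S = ⋃ b, P b ∧ ∀ b, Metric.ediam (P b) ≤ η

lemma isUnionOfTwoSmall_of_ediam_le {S : Set X} {η : ℝ≥0∞} (h : Metric.ediam S ≤ η) :
    IsUnionOfTwoSmall S η :=
  ⟨fun _ => S, (Set.iUnion_const S).symm, fun _ => h⟩

lemma isUnionOfTwoSmall_of_min_sub_le {S : Set ℝ} {η : ℝ}
    (h : ∀ α ∈ S, ∀ β ∈ S, ∀ γ ∈ S, min (β - α) (γ - β) ≤ η) :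
    IsUnionOfTwoSmall S (ENNReal.ofReal η) := by
  let left : Set ℝ := {β ∈ S | ∀ α ∈ S, β - α ≤ η}
  let right : Set ℝ := {β ∈ S | ∀ γ ∈ S, γ - β ≤ η}
  refine ⟨fun b => cond b left right, ?_, ?_⟩
  · rw [← Set.union_eq_iUnion]
    refine Set.Subset.antisymm (fun β hβ => ?_) (Set.union_subset (fun _ h => h.1) fun _ h => h.1)
    by_contra hβ'
    simp only [left, right, Set.mem_union, Set.mem_ofPred_eq, hβ, true_and, not_or, not_forall,
      not_le] at hβ'
    obtain ⟨⟨α, hα, hαβ⟩, γ, hγ, hβγ⟩ := hβ'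
    exact (h α hα β hβ γ hγ).not_gt (lt_min hαβ hβγ)
  · rintro (_ | _) <;> refine Metric.ediam_le_of_forall_dist_le ?_ <;>
      rintro x ⟨hx, hx'⟩ y ⟨hy, hy'⟩ <;>
      exact abs_sub_le_iff.2 (by constructor <;> linarith [hx' y hy, hy' x hx])

variable {ι : Type*} [Fintype ι]

lemma tsum_tsum_ne_top_of_le_rpow {f : ℕ → (ι → ℕ) → ℝ≥0∞} {K : ℕ} {B ρ : ℝ} (hB : 0 ≤ B)
    (hρ : Fintype.card ι + 1 < ρ) (hsupp : ∀ m k, f m k ≠ 0 → 1 ≤ m ∧ ∀ i, k i ≤ K * m)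
    (hf : ∀ m k, f m k ≤ ENNReal.ofReal (B * (m : ℝ) ^ (-ρ))) :
    ∑' (m) (k), f m k ≠ ∞ := by
  classical
  set n := Fintype.card ι with hn
  have hrow (m : ℕ) :
      ∑' k, f m k ≤ ENNReal.ofReal ((K + 1) ^ n * B * (m : ℝ) ^ ((n : ℝ) - ρ)) := by
    rcases Nat.eq_zero_or_pos m with rfl | hm
    · simp [ENNReal.tsum_eq_zero.2 fun k => by_contra fun h => absurd (hsupp 0 k h).1 (by simp)]
    have hm' : (1 : ℝ) ≤ m := by exact_mod_cast hm
    let box : Finset (ι → ℕ) := Fintype.piFinset fun _ => Finset.range (K * m + 1)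
    have hbox (k) (hk : k ∉ box) : f m k = 0 := by
      contrapose! hk
      simpa [box, Nat.lt_succ_iff] using (hsupp m k hk).2
    have hcard : (box.card : ℝ) ≤ ((K + 1) * m) ^ n := by
      rw [Fintype.card_piFinset, Finset.prod_const, Finset.card_univ, Finset.card_range, ← hn]
      push_cast
      gcongr
      linarith
    calc ∑' k, f m k = ∑ k ∈ box, f m k := tsum_eq_sum hbox
      _ ≤ box.card • ENNReal.ofReal (B * (m : ℝ) ^ (-ρ)) :=
          Finset.sum_le_card_nsmul _ _ _ fun k _ => hf m k
      _ = ENNReal.ofReal (box.card * (B * (m : ℝ) ^ (-ρ))) := by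
          rw [nsmul_eq_mul, ENNReal.ofReal_mul (Nat.cast_nonneg _), ENNReal.ofReal_natCast]
      _ ≤ ENNReal.ofReal (((K + 1) * m) ^ n * (B * (m : ℝ) ^ (-ρ))) := by gcongr
      _ = ENNReal.ofReal ((K + 1) ^ n * B * (m : ℝ) ^ ((n : ℝ) - ρ)) := by
          rw [sub_eq_add_neg, Real.rpow_add (by linarith), Real.rpow_natCast, mul_pow]
          ring_nf
  have hsum : Summable fun m : ℕ => (K + 1) ^ n * B * (m : ℝ) ^ ((n : ℝ) - ρ) :=
    (Real.summable_nat_rpow.2 (by linarith)).mul_left _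
  exact ne_top_of_le_ne_top hsum.tsum_ofReal_ne_top (ENNReal.tsum_le_tsum hrow)

variable {S : ℕ → (ι → ℕ) → Set X} {K : ℕ} {C τ : ℝ}

lemma dimH_setOf_infinite_mem_le_of_lt_mul (hC : 0 ≤ C) {d : ℝ≥0} (hd : 0 < d)
    (hτ : Fintype.card ι + 1 < τ * d)
    (hsupp : ∀ m k, (S m k).Nonempty → 1 ≤ m ∧ ∀ i, k i ≤ K * m)
    (hS : ∀ m k, IsUnionOfTwoSmall (S m k) (ENNReal.ofReal (C * (m : ℝ) ^ (-τ)))) :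
    dimH {x | {p : ℕ × (ι → ℕ) | x ∈ S p.1 p.2}.Infinite} ≤ d := by
  choose P hSP hP using hS
  let T : (ℕ × (ι → ℕ)) × Bool → Set X := fun p => P p.1.1 p.1.2 p.2
  have hd' : (0 : ℝ) < d := hd
  have hbound (m k) : ∑ b, Metric.ediam (P m k b) ^ (d : ℝ) ≤
      ENNReal.ofReal (2 * C ^ (d : ℝ) * (m : ℝ) ^ (-(τ * d))) := by
    have hpiece (b) : Metric.ediam (P m k b) ^ (d : ℝ) ≤
        ENNReal.ofReal (C ^ (d : ℝ) * (m : ℝ) ^ (-(τ * d))) := by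
      rw [← neg_mul, Real.rpow_mul (by positivity), ← Real.mul_rpow hC (by positivity),
        ← ENNReal.ofReal_rpow_of_nonneg (by positivity) hd'.le]
      exact ENNReal.rpow_le_rpow (hP m k b) hd'.le
    refine (Finset.sum_le_card_nsmul _ _ _ fun b _ => hpiece b).trans_eq ?_
    simp [mul_assoc, ENNReal.ofReal_mul]
  have hsum : ∑' p, Metric.ediam (T p) ^ (d : ℝ) ≠ ∞ := by
    rw [ENNReal.tsum_prod', ENNReal.tsum_prod']
    simp only [T, tsum_fintype]
    refine tsum_tsum_ne_top_of_le_rpow (by positivity) hτ (fun m k hmk => hsupp m k ?_) hbound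
    contrapose! hmk
    simp_all [Set.iUnion_eq_empty]
  refine (dimH_mono fun x hx => ?_).trans
    (dimH_setOf_infinite_mem_le_of_tsum_ediam_rpow_ne_top hd hsum)
  refine fun hfin => hx ((hfin.image Prod.fst).subset ?_)
  rintro ⟨m, k⟩ hmk
  rw [Set.mem_ofPred_eq, hSP, Set.mem_iUnion] at hmk
  obtain ⟨b, hb⟩ := hmk
  exact ⟨((m, k), b), hb, rfl⟩

lemma dimH_setOf_infinite_mem_le (hC : 0 ≤ C) (hτ : 0 < τ)
    (hsupp : ∀ m k, (S m k).Nonempty → 1 ≤ m ∧ ∀ i, k i ≤ K * m)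
    (hS : ∀ m k, IsUnionOfTwoSmall (S m k) (ENNReal.ofReal (C * (m : ℝ) ^ (-τ)))) :
    dimH {x | {p : ℕ × (ι → ℕ) | x ∈ S p.1 p.2}.Infinite} ≤
      ENNReal.ofReal ((Fintype.card ι + 1) / τ) := by
  refine ge_of_tendsto (ENNReal.continuous_ofReal.continuousWithinAt
    (s := Set.Ioi ((Fintype.card ι + 1) / τ))) ?_
  filter_upwards [self_mem_nhdsWithin] with σ (hσ : _ < σ)
  have hσ0 : 0 < σ := lt_trans (by positivity) hσ
  refine dimH_setOf_infinite_mem_le_of_lt_mul hC (Real.toNNReal_pos.2 hσ0) ?_ hsupp hS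
  rwa [Real.coe_toNNReal _ hσ0.le, mul_comm, ← div_lt_iff₀ hτ]

lemma dimH_setOf_infinite_mem_le_of_eventually (hC : 0 ≤ C) (hτ : 0 < τ)
    (hsupp : ∀ m k, (S m k).Nonempty → 1 ≤ m ∧ ∀ i, k i ≤ K * m)
    (hS : ∀ᶠ m : ℕ in atTop, ∀ k,
      IsUnionOfTwoSmall (S m k) (ENNReal.ofReal (C * (m : ℝ) ^ (-τ)))) :
    dimH {x | {p : ℕ × (ι → ℕ) | x ∈ S p.1 p.2}.Infinite} ≤
      ENNReal.ofReal ((Fintype.card ι + 1) / τ) := by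
  classical
  obtain ⟨M, hM⟩ := eventually_atTop.1 hS
  let S' : ℕ → (ι → ℕ) → Set X := fun m k => {x ∈ S m k | M ≤ m}
  have hS' (m k) : IsUnionOfTwoSmall (S' m k) (ENNReal.ofReal (C * (m : ℝ) ^ (-τ))) := by
    by_cases hm : M ≤ m
    · simpa [S', hm] using hM m hm k
    · exact isUnionOfTwoSmall_of_ediam_le (by simp [S', hm])
  refine (dimH_mono fun x hx => ?_).trans <| dimH_setOf_infinite_mem_le hC hτ
    (fun m k hmk => hsupp m k (hmk.mono (Set.sep_subset _ _))) hS'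
  have hsmall : {p : ℕ × (ι → ℕ) | x ∈ S p.1 p.2 ∧ p.1 < M}.Finite := by
    refine ((Set.finite_Iio M).prod (Set.finite_Iic fun _ : ι => K * M)).subset ?_
    rintro ⟨m, k⟩ ⟨hx, hm : m < M⟩
    exact ⟨hm, fun i => ((hsupp m k ⟨x, hx⟩).2 i).trans (Nat.mul_le_mul_left K hm.le)⟩
  refine (Set.Infinite.sdiff hx hsmall).mono ?_
  rintro p ⟨hp, hp'⟩
  exact ⟨hp, not_lt.1 fun h => hp' ⟨hp, h⟩⟩

end HausdorffCantelli

/-! ### Elementary inequalities -/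

lemma sq_div_two_le_exp_neg_add_exp_sub_two (x : ℝ) :
    x ^ 2 / 2 ≤ Real.exp (-x) + Real.exp x - 2 := by
  wlog hx : 0 ≤ x generalizing x
  · have := this (-x) (by linarith)
    rw [neg_neg, neg_sq] at this
    linarith
  linarith [Real.quadratic_le_exp_of_nonneg hx, Real.add_one_le_exp (-x)]

lemma rpow_mul_sq_le_rpow_sub_add_rpow_add {r : ℝ} (hr : 0 < r) (β η : ℝ) :
    r ^ β * ((η * Real.log r) ^ 2 / 2) ≤ r ^ (β - η) + r ^ (β + η) - 2 * r ^ β := by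
  have hexp : r ^ η = Real.exp (η * Real.log r) := by rw [Real.rpow_def_of_pos hr, mul_comm]
  have hfactor : r ^ (β - η) + r ^ (β + η) - 2 * r ^ β =
      r ^ β * (Real.exp (-(η * Real.log r)) + Real.exp (η * Real.log r) - 2) := by
    rw [sub_eq_add_neg β, Real.rpow_add hr, Real.rpow_add hr, Real.rpow_neg hr.le, Real.exp_neg,
      hexp]
    ring
  rw [hfactor]
  gcongr
  exact sq_div_two_le_exp_neg_add_exp_sub_two _

lemma one_div_max_le_abs_log_div {k m : ℕ} (hk : 1 ≤ k) (hm : 1 ≤ m) (hkm : k ≠ m) :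
    1 / ((max k m : ℕ) : ℝ) ≤ |Real.log (k / m)| := by
  wlog h : k < m generalizing k m
  · rw [max_comm, ← abs_neg, ← Real.log_inv, inv_div]
    exact this hm hk hkm.symm (by omega)
  have hk' : (0 : ℝ) < k := by exact_mod_cast hk
  have hm' : (0 : ℝ) < m := by exact_mod_cast hm
  have hkm' : (k : ℝ) + 1 ≤ m := by exact_mod_cast h
  rw [max_eq_right h.le]
  calc 1 / (m : ℝ) ≤ 1 - k / m := by rw [le_sub_iff_add_le, ← add_div, div_le_one hm']; linarith
    _ ≤ -Real.log (k / m) := by linarith [Real.log_le_sub_one_of_pos (div_pos hk' hm')]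
    _ ≤ |Real.log (k / m)| := neg_le_abs _

lemma abs_log_le_two_mul_abs_sub_one {x : ℝ} (hx : |x - 1| ≤ 1 / 2) :
    |Real.log x| ≤ 2 * |x - 1| := by
  have h : ‖Complex.log (1 + ((x - 1 : ℝ) : ℂ))‖ ≤ 3 / 2 * ‖((x - 1 : ℝ) : ℂ)‖ :=
    Complex.norm_log_one_add_half_le_self (by rwa [Complex.norm_real])
  have hx0 : 0 ≤ x := by linarith [(abs_le.1 hx).1]
  rw [Complex.norm_real, Real.norm_eq_abs, ← Complex.ofReal_one, ← Complex.ofReal_add,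
    add_sub_cancel, ← Complex.ofReal_log hx0, Complex.norm_real, Real.norm_eq_abs] at h
  linarith [abs_nonneg (x - 1)]

lemma exists_pos_forall_le_abs_sub {κ : Type*} [Finite κ] (f : κ → ℝ) (c : ℝ) :
    ∃ δ > 0, ∀ j, f j ≠ c → δ ≤ |f j - c| := by
  rcases isEmpty_or_nonempty {j // f j ≠ c} with hempty | hne
  · exact ⟨1, one_pos, fun j hj => (hempty.false ⟨j, hj⟩).elim⟩
  · obtain ⟨j₀, hj₀⟩ := Finite.exists_min fun j : {j // f j ≠ c} => |f j - c|
    exact ⟨_, abs_pos.2 (sub_ne_zero.2 j₀.2), fun j hj => hj₀ ⟨j, hj⟩⟩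

lemma eventually_const_mul_rpow_neg_le (D : ℝ) {s θ : ℝ} (hs : 0 < s) (hθ : 0 < θ) :
    ∀ᶠ m : ℕ in atTop, D * (m : ℝ) ^ (-s) ≤ θ := by
  have h := ((tendsto_rpow_neg_atTop hs).comp tendsto_natCast_atTop_atTop).const_mul D
  rw [mul_zero] at h
  exact (h.eventually_lt_const hθ).mono fun m hm => hm.le

/-! ### Convex exponential sums -/

variable {ι : Type*} [Fintype ι]

/-- The generalised Dirichlet polynomial `∑ aᵢ rᵢ ^ α` in the real variable `α`. It is used with
`rᵢ = kᵢ / m`, so that its value at a solution is close to `1`. -/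
noncomputable def expSum (a r : ι → ℝ) (α : ℝ) : ℝ := ∑ i, a i * r i ^ α

section ExpSum

variable {a r : ι → ℝ}

lemma convexOn_expSum (ha : ∀ i, 0 ≤ a i) (hr : ∀ i, 0 < r i) :
    ConvexOn ℝ Set.univ (expSum a r) := by
  have h : ConvexOn ℝ Set.univ (∑ i, fun α : ℝ => a i * r i ^ α) :=
    Finset.sum_induction _ (ConvexOn ℝ Set.univ) (fun _ _ => ConvexOn.add)
      (convexOn_const 0 convex_univ) fun i _ => (convexOn_rpow_left (hr i)).smul (ha i)
  convert h using 1
  ext α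
  simp [expSum]

lemma sum_mul_sq_le_expSum_sub_add_expSum_add (ha : ∀ i, 0 ≤ a i) (hr : ∀ i, 0 < r i)
    (J : Finset ι) (β η : ℝ) :
    ∑ i ∈ J, a i * (r i ^ β * ((η * Real.log (r i)) ^ 2 / 2)) ≤
      expSum a r (β - η) + expSum a r (β + η) - 2 * expSum a r β := by
  calc _ ≤ ∑ i, a i * (r i ^ β * ((η * Real.log (r i)) ^ 2 / 2)) :=
        Finset.sum_le_univ_sum_of_nonneg fun i => by have := ha i; have := hr i; positivity
    _ ≤ ∑ i, a i * (r i ^ (β - η) + r i ^ (β + η) - 2 * r i ^ β) :=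
        Finset.sum_le_sum fun i _ => mul_le_mul_of_nonneg_left
          (rpow_mul_sq_le_rpow_sub_add_rpow_add (hr i) β η) (ha i)
    _ = _ := by
        simp only [expSum, mul_add, mul_sub, Finset.sum_add_distrib, Finset.sum_sub_distrib,
          Finset.mul_sum]
        congr 1
        exact Finset.sum_congr rfl fun i _ => by ring

lemma mul_sq_le_of_expSum_le (ha : ∀ i, 0 ≤ a i) (hr : ∀ i, 0 < r i) {J : Finset ι}
    {ℓ μ M α β γ η : ℝ} (hℓ : 0 ≤ ℓ) (hlog : ∀ i ∈ J, ℓ ≤ |Real.log (r i)|)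
    (hmass : μ ≤ ∑ i ∈ J, a i * r i ^ β) (hα : expSum a r α ≤ M) (hγ : expSum a r γ ≤ M)
    (hη : 0 ≤ η) (hαβ : η ≤ β - α) (hβγ : η ≤ γ - β) :
    μ * ((η * ℓ) ^ 2 / 2) ≤ 2 * (M - expSum a r β) := by
  have hconv {x : ℝ} (hx : x ∈ Set.Icc α γ) : expSum a r x ≤ M :=
    ((convexOn_expSum ha hr).le_max_of_mem_Icc trivial trivial hx).trans (max_le hα hγ)
  calc μ * ((η * ℓ) ^ 2 / 2) ≤ (∑ i ∈ J, a i * r i ^ β) * ((η * ℓ) ^ 2 / 2) := by gcongr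
    _ ≤ ∑ i ∈ J, a i * (r i ^ β * ((η * Real.log (r i)) ^ 2 / 2)) := by
        rw [Finset.sum_mul]
        refine Finset.sum_le_sum fun i hi => ?_
        have hsq : ℓ ^ 2 ≤ Real.log (r i) ^ 2 := by
          rw [← sq_abs (Real.log _)]
          exact pow_le_pow_left₀ hℓ (hlog i hi) 2
        rw [mul_assoc, mul_pow, mul_pow]
        have := ha i
        have := hr i
        gcongr
    _ ≤ expSum a r (β - η) + expSum a r (β + η) - 2 * expSum a r β :=
        sum_mul_sq_le_expSum_sub_add_expSum_add ha hr J β η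
    _ ≤ 2 * (M - expSum a r β) := by
        have hleft : expSum a r (β - η) ≤ M := hconv ⟨by linarith, by linarith⟩
        have hright : expSum a r (β + η) ≤ M := hconv ⟨by linarith, by linarith⟩
        linarith

end ExpSum

lemma abs_log_add_mul_log_le {c r x ε : ℝ} (hc : 0 < c) (hr : 0 < r) (hε : ε ≤ 1 / 2)
    (hx : |c * r ^ x - 1| ≤ ε) : |Real.log c + x * Real.log r| ≤ 2 * ε := by
  rw [← Real.log_rpow hr, ← Real.log_mul hc.ne' (Real.rpow_pos_of_pos hr x).ne']
  linarith [abs_log_le_two_mul_abs_sub_one (hx.trans hε)]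

lemma abs_sub_le_of_abs_mul_rpow_sub_one_le {c r x y t ε : ℝ} (hc : 0 < c) (hc1 : c ≠ 1)
    (hr : 0 < r) (hx0 : 0 ≤ x) (hxt : x ≤ t) (hε : ε ≤ 1 / 2) (hεc : ε ≤ |Real.log c| / 4)
    (hx : |c * r ^ x - 1| ≤ ε) (hy : |c * r ^ y - 1| ≤ ε) :
    |x - y| ≤ 8 * t / |Real.log c| * ε := by
  have hlogc : 0 < |Real.log c| := abs_pos.2 (Real.log_ne_zero_of_pos_of_ne_one hc hc1)
  have hx' := abs_log_add_mul_log_le hc hr hε hx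
  have hy' := abs_log_add_mul_log_le hc hr hε hy
  have hslope : |Real.log c| / 2 ≤ t * |Real.log r| := by
    have h := abs_sub (Real.log c + x * Real.log r) (x * Real.log r)
    rw [add_sub_cancel_right, abs_mul x, abs_of_nonneg hx0] at h
    linarith [mul_le_mul_of_nonneg_right hxt (abs_nonneg (Real.log r))]
  have hdiff : |x - y| * |Real.log r| ≤ 4 * ε := by
    have h := abs_sub (Real.log c + x * Real.log r) (Real.log c + y * Real.log r)
    rw [add_sub_add_left_eq_sub, ← sub_mul, abs_mul] at h
    linarith
  rw [div_mul_eq_mul_div, le_div_iff₀ hlogc]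
  calc |x - y| * |Real.log c| = 2 * (|x - y| * (|Real.log c| / 2)) := by ring
    _ ≤ 2 * (|x - y| * (t * |Real.log r|)) := by gcongr
    _ = 2 * t * (|x - y| * |Real.log r|) := by ring
    _ ≤ 2 * t * (4 * ε) := by gcongr; linarith
    _ = 8 * t * ε := by ring

/-! ### Solutions with given bases -/

/-- The exponents `α` for which `y = ⌊m ^ α⌋` and `xᵢ = ⌊kᵢ ^ α⌋` form a non-trivial solution of
`y = ∑ aᵢ xᵢ` in `PS α`. -/
def solutionExponents (a : ι → ℝ) (m : ℕ) (k : ι → ℕ) : Set ℝ :=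
  {α | 1 ≤ m ∧ (∀ i, 1 ≤ k i) ∧
    (⌊(m : ℝ) ^ α⌋ : ℝ) = ∑ i, a i * (⌊(k i : ℝ) ^ α⌋ : ℝ) ∧
    ¬(∑ i, a i = 1 ∧ ∀ i, ⌊(k i : ℝ) ^ α⌋ = ⌊(m : ℝ) ^ α⌋)}

lemma abs_sum_mul_sub_le_of_floor_eq {a x : ι → ℝ} {y : ℝ} (ha : ∀ i, 0 ≤ a i)
    (h : (⌊y⌋ : ℝ) = ∑ i, a i * (⌊x i⌋ : ℝ)) : |∑ i, a i * x i - y| ≤ 1 + ∑ i, a i := by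
  have hfract : ∑ i, a i * x i - y = ∑ i, a i * Int.fract (x i) - Int.fract y := by
    simp only [Int.fract, mul_sub, Finset.sum_sub_distrib]
    linarith
  have hnonneg : 0 ≤ ∑ i, a i * Int.fract (x i) :=
    Finset.sum_nonneg fun i _ => mul_nonneg (ha i) (Int.fract_nonneg _)
  have hle : ∑ i, a i * Int.fract (x i) ≤ ∑ i, a i :=
    Finset.sum_le_sum fun i _ => mul_le_of_le_one_right (ha i) (Int.fract_lt_one _).le
  rw [hfract, abs_le]
  constructor <;> linarith [Int.fract_nonneg y, Int.fract_lt_one y]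

lemma expSum_div_sub_one {m : ℕ} (hm : 1 ≤ m) (a : ι → ℝ) (k : ι → ℕ) (α : ℝ) :
    expSum a (fun i => (k i : ℝ) / m) α - 1 =
      (∑ i, a i * (k i : ℝ) ^ α - (m : ℝ) ^ α) * (m : ℝ) ^ (-α) := by
  have hm0 : (0 : ℝ) < m := by exact_mod_cast hm
  have hmα : (m : ℝ) ^ α ≠ 0 := (Real.rpow_pos_of_pos hm0 α).ne'
  rw [Real.rpow_neg hm0.le, sub_mul, mul_inv_cancel₀ hmα, Finset.sum_mul, expSum]
  congr 1
  refine Finset.sum_congr rfl fun i _ => ?_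
  rw [Real.div_rpow (Nat.cast_nonneg _) hm0.le, div_eq_mul_inv, mul_assoc]

section SolutionExponents

variable {a : ι → ℝ} {m : ℕ} {k : ι → ℕ} {s α β γ : ℝ}

lemma abs_expSum_sub_one_le (ha : ∀ i, 0 ≤ a i) (hs : s ≤ α) (hα : α ∈ solutionExponents a m k) :
    |expSum a (fun i => (k i : ℝ) / m) α - 1| ≤ (1 + ∑ i, a i) * (m : ℝ) ^ (-s) := by
  obtain ⟨hm, -, heq, -⟩ := hα
  have hm1 : (1 : ℝ) ≤ m := by exact_mod_cast hm
  have hnum := abs_sum_mul_sub_le_of_floor_eq ha heq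
  rw [expSum_div_sub_one hm, abs_mul, abs_of_nonneg (by positivity : 0 ≤ (m : ℝ) ^ (-α))]
  gcongr
  exact (abs_nonneg _).trans hnum

lemma floor_natCast_rpow_pos {j : ℕ} (hj : 1 ≤ j) (hα : 0 ≤ α) : 0 < ⌊(j : ℝ) ^ α⌋ :=
  Int.floor_pos.2 (Real.one_le_rpow (by exact_mod_cast hj) hα)

lemma le_mul_of_mem_solutionExponents (ha : ∀ i, 0 < a i) {K : ℕ} (hK : 1 ≤ K)
    (hKa : ∀ i, 2 / a i ≤ K) (hα1 : 1 ≤ α) (hα : α ∈ solutionExponents a m k) (i : ι) :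
    k i ≤ K * m := by
  obtain ⟨-, hk, heq, -⟩ := hα
  have hfloor (j) : (1 : ℝ) ≤ ⌊(k j : ℝ) ^ α⌋ := by
    exact_mod_cast floor_natCast_rpow_pos (hk j) (by linarith)
  have hterm : a i * (⌊(k i : ℝ) ^ α⌋ : ℝ) ≤ (m : ℝ) ^ α := by
    refine le_trans ?_ (Int.floor_le _)
    rw [heq]
    exact Finset.single_le_sum (f := fun j => a j * (⌊(k j : ℝ) ^ α⌋ : ℝ))
      (fun j _ => mul_nonneg (ha j).le (by linarith [hfloor j])) (Finset.mem_univ i)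
  have hpow : (k i : ℝ) ^ α ≤ ((K * m : ℕ) : ℝ) ^ α := by
    calc (k i : ℝ) ^ α ≤ 2 * (⌊(k i : ℝ) ^ α⌋ : ℝ) := by
          linarith [hfloor i, Int.lt_floor_add_one ((k i : ℝ) ^ α)]
      _ = 2 / a i * (a i * (⌊(k i : ℝ) ^ α⌋ : ℝ)) := by field_simp [(ha i).ne']
      _ ≤ K * (m : ℝ) ^ α := by
          have := hfloor i
          have := ha i
          gcongr
          exact hKa i
      _ ≤ (K : ℝ) ^ α * (m : ℝ) ^ α := by
          gcongr
          exact Real.self_le_rpow_of_one_le (by exact_mod_cast hK) hα1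
      _ = ((K * m : ℕ) : ℝ) ^ α := by rw [Nat.cast_mul, Real.mul_rpow] <;> positivity
  exact_mod_cast (Real.rpow_le_rpow_iff (by positivity) (by positivity) (by linarith)).1 hpow

lemma exists_forall_le_mul (ha : ∀ i, 0 < a i) :
    ∃ K : ℕ, 1 ≤ K ∧ ∀ α, 1 ≤ α → ∀ m k, α ∈ solutionExponents a m k → ∀ i, k i ≤ K * m := by
  obtain ⟨K, hK⟩ := Finite.exists_le fun i => ⌈2 / a i⌉₊
  refine ⟨max 1 K, le_max_left _ _, fun α hα m k h =>
    le_mul_of_mem_solutionExponents ha (le_max_left _ _) (fun i => ?_) hα h⟩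
  exact (Nat.le_ceil _).trans (by exact_mod_cast (hK i).trans (le_max_right 1 K))

lemma sum_filter_eq_ne_one (ha : ∀ i, 0 < a i) (hα0 : 0 ≤ α) (hα : α ∈ solutionExponents a m k) :
    ∑ i with k i = m, a i ≠ 1 := by
  obtain ⟨-, hk, heq, hnontrivial⟩ := hα
  intro hsum
  have hpos (i) : 0 < a i * (⌊(k i : ℝ) ^ α⌋ : ℝ) :=
    mul_pos (ha i) (by exact_mod_cast floor_natCast_rpow_pos (hk i) hα0)
  have hdiag : ∑ i with k i = m, a i * (⌊(k i : ℝ) ^ α⌋ : ℝ) = ⌊(m : ℝ) ^ α⌋ := by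
    rw [← one_mul (⌊(m : ℝ) ^ α⌋ : ℝ), ← hsum, Finset.sum_mul]
    exact Finset.sum_congr rfl fun i hi => by rw [(Finset.mem_filter.1 hi).2]
  have hoff : ∑ i with ¬k i = m, a i * (⌊(k i : ℝ) ^ α⌋ : ℝ) = 0 := by
    rw [← Finset.sum_filter_add_sum_filter_not Finset.univ (fun i => k i = m)] at heq
    linarith
  have hkm (i) : k i = m := by
    by_contra hi
    have hzero := (Finset.sum_eq_zero_iff_of_nonneg fun j _ => (hpos j).le).1 hoff i (by simp [hi])
    exact (hpos i).ne' hzero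
  exact hnontrivial ⟨by simpa [hkm] using hsum, fun i => by rw [hkm i]⟩

lemma half_le_sum_filter_ne {δ : ℝ} (ha : ∀ i, 0 ≤ a i) (hm : 1 ≤ m)
    (hδ : δ ≤ |∑ i with k i = m, a i - 1|)
    (hα : |expSum a (fun i => (k i : ℝ) / m) α - 1| ≤ δ / 2) :
    δ / 2 ≤ ∑ i with k i ≠ m, a i * ((k i : ℝ) / m) ^ α := by
  have hm0 : (m : ℝ) ≠ 0 := by positivity
  have hdiag : ∑ i with k i = m, a i * ((k i : ℝ) / m) ^ α = ∑ i with k i = m, a i :=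
    Finset.sum_congr rfl fun i hi => by
      rw [(Finset.mem_filter.1 hi).2, div_self hm0, Real.one_rpow, mul_one]
  have hoff : 0 ≤ ∑ i with k i ≠ m, a i * ((k i : ℝ) / m) ^ α :=
    Finset.sum_nonneg fun i _ => mul_nonneg (ha i) (by positivity)
  have hsplit : expSum a (fun i => (k i : ℝ) / m) α =
      ∑ i with k i = m, a i + ∑ i with k i ≠ m, a i * ((k i : ℝ) / m) ^ α := by
    rw [← hdiag, expSum]
    exact (Finset.sum_filter_add_sum_filter_not _ _ _).symm
  rw [hsplit, add_sub_right_comm] at hα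
  have htri := abs_sub (∑ i with k i = m, a i + ∑ i with k i ≠ m, a i * ((k i : ℝ) / m) ^ α - 1)
    (∑ i with k i ≠ m, a i * ((k i : ℝ) / m) ^ α)
  rw [abs_of_nonneg hoff, add_sub_right_comm, add_sub_cancel_right] at htri
  linarith

lemma mul_sq_le_of_separated (ha : ∀ i, 0 < a i) {δ η : ℝ} {K : ℕ} (hK : 1 ≤ K)
    (hkK : ∀ i, k i ≤ K * m) (hδ : δ ≤ |∑ i with k i = m, a i - 1|)
    (hm : (1 + ∑ i, a i) * (m : ℝ) ^ (-s) ≤ δ / 2)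
    (hα : α ∈ Set.Ici s ∩ solutionExponents a m k) (hβ : β ∈ Set.Ici s ∩ solutionExponents a m k)
    (hγ : γ ∈ Set.Ici s ∩ solutionExponents a m k)
    (hη : 0 ≤ η) (hαβ : η ≤ β - α) (hβγ : η ≤ γ - β) :
    δ * η ^ 2 ≤ 16 * (1 + ∑ i, a i) * K ^ 2 * ((m : ℝ) ^ 2 * (m : ℝ) ^ (-s)) := by
  have ha' (i) := (ha i).le
  have hm1 : 1 ≤ m := hβ.2.1
  have hk : ∀ i, 1 ≤ k i := hβ.2.2.1
  have hm0 : (0 : ℝ) < m := by exact_mod_cast hm1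
  have closeα := abs_le.1 (abs_expSum_sub_one_le ha' hα.1 hα.2)
  have closeβ := abs_expSum_sub_one_le ha' hβ.1 hβ.2
  have closeγ := abs_le.1 (abs_expSum_sub_one_le ha' hγ.1 hγ.2)
  have hlog : ∀ i ∈ Finset.univ.filter (k · ≠ m),
      1 / ((K : ℝ) * m) ≤ |Real.log ((k i : ℝ) / m)| := fun i hi => by
    refine le_trans ?_ (one_div_max_le_abs_log_div (hk i) hm1 (Finset.mem_filter.1 hi).2)
    have hmax : max (k i) m ≤ K * m := max_le (hkK i) (Nat.le_mul_of_pos_left m hK)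
    exact one_div_le_one_div_of_le (by exact_mod_cast lt_max_of_lt_right hm1)
      (by exact_mod_cast hmax)
  have hcurv := mul_sq_le_of_expSum_le (M := 1 + (1 + ∑ i, a i) * (m : ℝ) ^ (-s)) ha'
    (fun i => div_pos (by exact_mod_cast hk i) hm0) (by positivity) hlog
    (half_le_sum_filter_ne ha' hm1 hδ (closeβ.trans hm))
    (by linarith [closeα.2]) (by linarith [closeγ.2]) hη hαβ hβγ
  have hcurv' : δ * η ^ 2 / (4 * (K * m) ^ 2) ≤ 4 * ((1 + ∑ i, a i) * (m : ℝ) ^ (-s)) := by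
    calc δ * η ^ 2 / (4 * (K * m) ^ 2) = δ / 2 * ((η * (1 / (K * m))) ^ 2 / 2) := by
          field_simp
          norm_num
      _ ≤ _ := hcurv
      _ ≤ _ := by linarith [(abs_le.1 closeβ).1]
  rw [div_le_iff₀ (by positivity)] at hcurv'
  linarith

lemma exists_eventually_forall_min_sub_le (ha : ∀ i, 0 < a i) (hs : 1 ≤ s) :
    ∃ C, 0 ≤ C ∧ ∀ᶠ m : ℕ in atTop, ∀ k,
      ∀ α ∈ Set.Ici s ∩ solutionExponents a m k, ∀ β ∈ Set.Ici s ∩ solutionExponents a m k,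
      ∀ γ ∈ Set.Ici s ∩ solutionExponents a m k,
        min (β - α) (γ - β) ≤ C * (m : ℝ) ^ (-(s / 2 - 1)) := by
  obtain ⟨K, hK, hkK⟩ := exists_forall_le_mul ha
  obtain ⟨δ, hδ0, hδ⟩ := exists_pos_forall_le_abs_sub (fun J : Finset ι => ∑ i ∈ J, a i) 1
  have hA : 0 ≤ 1 + ∑ i, a i := by
    linarith [Finset.sum_nonneg fun i (_ : i ∈ Finset.univ) => (ha i).le]
  refine ⟨4 * K * √((1 + ∑ i, a i) / δ), by positivity, ?_⟩
  filter_upwards [eventually_const_mul_rpow_neg_le (1 + ∑ i, a i) (zero_lt_one.trans_le hs)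
    (half_pos hδ0)] with m hm k α hα β hβ γ hγ
  rcases le_total (min (β - α) (γ - β)) 0 with h | h
  · exact h.trans (by positivity)
  have hβs : s ≤ β := hβ.1
  have hm0 : (0 : ℝ) < m := by exact_mod_cast hβ.2.1
  have hsep := mul_sq_le_of_separated ha hK (hkK β (hs.trans hβs) m k hβ.2)
    (hδ _ (sum_filter_eq_ne_one ha (by linarith) hβ.2)) hm hα hβ hγ h
    (min_le_left _ _) (min_le_right _ _)
  have hpow : ((m : ℝ) ^ (-(s / 2 - 1))) ^ 2 = (m : ℝ) ^ 2 * (m : ℝ) ^ (-s) := by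
    rw [← Real.rpow_natCast, ← Real.rpow_natCast, ← Real.rpow_mul hm0.le, ← Real.rpow_add hm0]
    push_cast
    ring_nf
  refine le_of_sq_le_sq ?_ (by positivity)
  rw [mul_pow, mul_pow, Real.sq_sqrt (by positivity), hpow]
  calc min (β - α) (γ - β) ^ 2
      ≤ 16 * (1 + ∑ i, a i) * K ^ 2 * ((m : ℝ) ^ 2 * (m : ℝ) ^ (-s)) / δ := by
        rwa [le_div_iff₀' hδ0]
    _ = (4 * K) ^ 2 * ((1 + ∑ i, a i) / δ) * ((m : ℝ) ^ 2 * (m : ℝ) ^ (-s)) := by ring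

lemma apply_default_ne_one_of_mem_solutionExponents [Unique ι]
    (hα : α ∈ solutionExponents a m k) : a default ≠ 1 := by
  obtain ⟨-, -, heq, hnontrivial⟩ := hα
  intro ha1
  rw [Fintype.sum_unique, ha1, one_mul] at heq
  refine hnontrivial ⟨by rw [Fintype.sum_unique, ha1], fun i => ?_⟩
  rw [Unique.eq_default i]
  exact_mod_cast heq.symm

lemma exists_eventually_ediam_solutionExponents_le [Unique ι] (ha : ∀ i, 0 < a i) (hs : 0 < s)
    (t : ℝ) :
    ∃ C, 0 ≤ C ∧ ∀ᶠ m : ℕ in atTop, ∀ k,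
      Metric.ediam (Set.Icc s t ∩ solutionExponents a m k) ≤
        ENNReal.ofReal (C * (m : ℝ) ^ (-s)) := by
  set c := a default
  by_cases hc1 : c = 1
  · refine ⟨0, le_rfl, .of_forall fun m k => ?_⟩
    have hempty : solutionExponents a m k = ∅ :=
      Set.eq_empty_of_forall_notMem fun α hα =>
        apply_default_ne_one_of_mem_solutionExponents hα hc1
    simp [hempty]
  have hc : 0 < c := ha default
  have hlogc : 0 < |Real.log c| := abs_pos.2 (Real.log_ne_zero_of_pos_of_ne_one hc hc1)
  refine ⟨8 * |t| / |Real.log c| * (1 + c), by positivity, ?_⟩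
  filter_upwards [eventually_const_mul_rpow_neg_le (1 + c) hs one_half_pos,
    eventually_const_mul_rpow_neg_le (1 + c) hs (div_pos hlogc four_pos)] with m hm hmc k
  refine Metric.ediam_le_of_forall_dist_le fun α hα β hβ => ?_
  have hclose {x : ℝ} (hx : x ∈ Set.Icc s t ∩ solutionExponents a m k) :
      |c * ((k default : ℝ) / m) ^ x - 1| ≤ (1 + c) * (m : ℝ) ^ (-s) := by
    simpa only [expSum, Fintype.sum_unique] using
      abs_expSum_sub_one_le (fun i => (ha i).le) hx.1.1 hx.2
  have hr : (0 : ℝ) < (k default : ℝ) / m :=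
    div_pos (by exact_mod_cast hα.2.2.1 default) (by exact_mod_cast hα.2.1)
  rw [mul_assoc]
  exact abs_sub_le_of_abs_mul_rpow_sub_one_le hc hc1 hr (hs.le.trans hα.1.1)
    (hα.1.2.trans (le_abs_self t)) hm hmc (hclose hα) (hclose hβ)

end SolutionExponents

/-- The rate `τ` at which the exponents in `[s, t]` solving the equation in `n` variables with
given bases concentrate: for large `m` they lie in two sets of diameter `O(m ^ (-τ))`. One
variable is special, because then the equation is affine in `α` after taking logarithms; in
general only strict convexity is available, which costs a square root. -/
noncomputable def coverExponent (n : ℕ) (s : ℝ) : ℝ := if n = 1 then s else s / 2 - 1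

lemma coverExponent_pos (n : ℕ) {s : ℝ} (hs : 2 < s) : 0 < coverExponent n s := by
  unfold coverExponent
  split_ifs <;> linarith

lemma add_one_div_coverExponent_le {n : ℕ} (hn : 1 ≤ n) {s : ℝ} (hs : 3 * (n : ℝ) + 4 < s) :
    (n + 1) / coverExponent n s ≤ 3 * n / (s - 4) := by
  have hn' : (1 : ℝ) ≤ n := by exact_mod_cast hn
  rw [div_le_div_iff₀ (coverExponent_pos n (by linarith)) (by linarith), coverExponent]
  split_ifs with h
  · subst h
    push_cast
    linarith
  · have hn2 : (2 : ℝ) ≤ n := by exact_mod_cast (by omega : 2 ≤ n)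
    nlinarith

section Dimension

variable {a : ι → ℝ} {s t : ℝ}

lemma exists_eventually_isUnionOfTwoSmall_solutionExponents (ha : ∀ i, 0 < a i) (hs : 1 ≤ s)
    (t : ℝ) :
    ∃ C, 0 ≤ C ∧ ∀ᶠ m : ℕ in atTop, ∀ k,
      IsUnionOfTwoSmall (Set.Icc s t ∩ solutionExponents a m k)
        (ENNReal.ofReal (C * (m : ℝ) ^ (-coverExponent (Fintype.card ι) s))) := by
  unfold coverExponent
  split_ifs with hcard
  · obtain ⟨_⟩ := Fintype.card_eq_one_iff_nonempty_unique.1 hcard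
    obtain ⟨C, hC, h⟩ := exists_eventually_ediam_solutionExponents_le ha (zero_lt_one.trans_le hs) t
    exact ⟨C, hC, h.mono fun m hm k => isUnionOfTwoSmall_of_ediam_le (hm k)⟩
  · obtain ⟨C, hC, h⟩ := exists_eventually_forall_min_sub_le ha hs
    have hsub (m k) : Set.Icc s t ∩ solutionExponents a m k ⊆
        Set.Ici s ∩ solutionExponents a m k :=
      Set.inter_subset_inter_left _ Set.Icc_subset_Ici_self
    exact ⟨C, hC, h.mono fun m hm k => isUnionOfTwoSmall_of_min_sub_le fun α hα β hβ γ hγ =>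
      hm k α (hsub m k hα) β (hsub m k hβ) γ (hsub m k hγ)⟩

lemma infinite_setOf_mem_solutionExponents {α : ℝ}
    (hα : {sol : ℤ × (ι → ℤ) |
      sol.1 ∈ PS α ∧ (∀ i, sol.2 i ∈ PS α) ∧
      (sol.1 : ℝ) = ∑ i, a i * (sol.2 i : ℝ) ∧
      ¬(∑ i, a i = 1 ∧ ∀ i, sol.2 i = sol.1)}.Infinite) :
    {p : ℕ × (ι → ℕ) | α ∈ solutionExponents a p.1 p.2}.Infinite := by
  refine fun hfin => hα ((hfin.image fun p =>
    (⌊(p.1 : ℝ) ^ α⌋, fun i => ⌊(p.2 i : ℝ) ^ α⌋)).subset ?_)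
  rintro ⟨y, x⟩ ⟨⟨m, hm, rfl⟩, hx, heq, hnontrivial⟩
  choose k hk hxk using hx
  obtain rfl : x = fun i => ⌊(k i : ℝ) ^ α⌋ := funext hxk
  exact ⟨(m, k), ⟨hm, hk, heq, hnontrivial⟩, rfl⟩

theorem statement4_general (ha : ∀ i, 0 < a i) (hs : 2 < s) :
    dimH {α ∈ Set.Icc s t |
      {sol : ℤ × (ι → ℤ) |
        sol.1 ∈ PS α ∧ (∀ i, sol.2 i ∈ PS α) ∧
        (sol.1 : ℝ) = ∑ i, a i * (sol.2 i : ℝ) ∧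
        ¬(∑ i, a i = 1 ∧ ∀ i, sol.2 i = sol.1)}.Infinite} ≤
      ENNReal.ofReal ((Fintype.card ι + 1) / coverExponent (Fintype.card ι) s) := by
  have hs1 : 1 ≤ s := by linarith
  obtain ⟨K, -, hK⟩ := exists_forall_le_mul ha
  obtain ⟨C, hC, hcover⟩ := exists_eventually_isUnionOfTwoSmall_solutionExponents ha hs1 t
  have hsupp (m : ℕ) (k : ι → ℕ) (h : (Set.Icc s t ∩ solutionExponents a m k).Nonempty) :
      1 ≤ m ∧ ∀ i, k i ≤ K * m := by
    obtain ⟨α, hα, hsol⟩ := h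
    exact ⟨hsol.1, hK α (hs1.trans hα.1) m k hsol⟩
  refine (dimH_mono fun α hα => ?_).trans <|
    dimH_setOf_infinite_mem_le_of_eventually hC (coverExponent_pos _ hs) hsupp hcover
  exact (infinite_setOf_mem_solutionExponents hα.2).mono fun p hp => ⟨hα.1, hp⟩

end Dimension

end

/-- For positive reals `a₁, …, aₙ` and `3n + 4 < s < t`, the set of `α ∈ [s, t]` for
which `y = a₁x₁ + ⋯ + aₙxₙ` has infinitely many non-trivial solutions in
`PS(α)^{n+1}` has Hausdorff dimension at most `3n/(s − 4)`. -/
theorem statement4 (n : ℕ) (hn : 1 ≤ n) (a : Fin n → ℝ) (ha : ∀ i, 0 < a i)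
    (s t : ℝ) (hs : 3 * (n : ℝ) + 4 < s) (hst : s < t) :
    dimH {α ∈ Set.Icc s t |
      {sol : ℤ × (Fin n → ℤ) |
        sol.1 ∈ PS α ∧ (∀ i, sol.2 i ∈ PS α) ∧
        (sol.1 : ℝ) = ∑ i, a i * (sol.2 i : ℝ) ∧
        ¬(∑ i, a i = 1 ∧ ∀ i, sol.2 i = sol.1)}.Infinite} ≤
      ENNReal.ofReal (3 * (n : ℝ) / (s - 4)) := by
  refine (statement4_general ha (by linarith [n.cast_nonneg (α := ℝ)])).trans
    (ENNReal.ofReal_le_ofReal ?_)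
  simpa only [Fintype.card_fin] using add_one_div_coverExponent_le hn hs
end

section
/- For all real s, t with 3 < s < t, the Hausdorff dimension of the set A(s,t) = {α ∈ [s, t] : there are infinitely many triples (x, y, z) ∈ PS(α)³ with x + y = z} is at most 3/s. -/
open MeasureTheory

/-!
If `⌊a ^ α⌋ + ⌊b ^ α⌋ = ⌊c ^ α⌋` with `a ≤ b`, then `a < c`, `b < c` and
`|a ^ α + b ^ α - c ^ α| < 2`, that is, `(a / c) ^ α + (b / c) ^ α = 1 + O(c ^ (-α))`.
The left-hand side decreases in `α` at rate at least of order `-log (b / c) ≥ (c - b) / c`, so for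
fixed `a, b, c` such exponents `α ≥ s` fill a set of diameter `O(c ^ (1 - s) / (c - b))`.
Each exponent with infinitely many solutions lies in infinitely many of these sets, and the sum of
the `σ`-th powers of their diameters is `O(∑ c, c ^ (2 - s * σ))` for `σ < 1`, which converges when
`σ > 3 / s`. The Hausdorff–Cantelli lemma concludes.
-/

open Filter Topology Set
open scoped ENNReal

section HausdorffCantelli

variable {X ι : Type*} [EMetricSpace X] [MeasurableSpace X] [BorelSpace X] [Countable ι]

theorem hausdorffMeasure_setOf_infinite_mem_eq_zero {d : ℝ} (hd : 0 < d) {E : ι → Set X}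
    (hE : ∑' i, Metric.ediam (E i) ^ d ≠ ∞) : μH[d] {x | {i | x ∈ E i}.Infinite} = 0 := by
  have tail_tendsto := ENNReal.tendsto_tsum_compl_atTop_zero hE
  have radius_tendsto : Tendsto
      (fun F : Finset ι ↦ (∑' i : {i // i ∉ F}, Metric.ediam (E i) ^ d) ^ d⁻¹) atTop (𝓝 0) := by
    simpa only [ENNReal.zero_rpow_of_pos (inv_pos.2 hd)] using tail_tendsto.ennrpow_const d⁻¹
  rw [← nonpos_iff_eq_zero, ← tail_tendsto.liminf_eq]
  refine Measure.hausdorffMeasure_le_liminf_tsum d _ _ radius_tendsto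
    (fun F (i : {i // i ∉ F}) ↦ E i) (.of_forall fun F i ↦ ?_) (.of_forall fun F x hx ↦ ?_)
  · rw [ENNReal.le_rpow_inv_iff hd]
    exact ENNReal.le_tsum (f := fun j : {i // i ∉ F} ↦ Metric.ediam (E j) ^ d) i
  · obtain ⟨i, hi, hiF⟩ := hx.exists_notMem_finset F
    exact mem_iUnion.2 ⟨⟨i, hiF⟩, hi⟩

end HausdorffCantelli

section RealPowers

theorem mul_rpow_sub_one_le_rpow_sub_rpow {p x : ℝ} (hp₀ : 0 ≤ p) (hp₁ : p ≤ 1) (hx : 0 ≤ x) :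
    p * (x + 1) ^ (p - 1) ≤ (x + 1) ^ p - x ^ p := by
  have hx₁ : 0 < x + 1 := by linarith
  have bernoulli : (x / (x + 1)) ^ p ≤ 1 - p / (x + 1) := by
    have inv_le_one : (x + 1)⁻¹ ≤ 1 := inv_le_one_of_one_le₀ (by linarith)
    calc (x / (x + 1)) ^ p = (1 + -(x + 1)⁻¹) ^ p := by congr 1; field_simp; ring
      _ ≤ 1 + p * -(x + 1)⁻¹ := rpow_one_add_le_one_add_mul_self (neg_le_neg inv_le_one) hp₀ hp₁
      _ = 1 - p / (x + 1) := by ring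
  rw [Real.div_rpow hx hx₁.le, div_le_iff₀ (Real.rpow_pos_of_pos hx₁ p)] at bernoulli
  rw [Real.rpow_sub_one hx₁.ne']
  calc p * ((x + 1) ^ p / (x + 1)) = (x + 1) ^ p - (1 - p / (x + 1)) * (x + 1) ^ p := by ring
    _ ≤ (x + 1) ^ p - x ^ p := by linarith

theorem sum_range_add_one_rpow_sub_one_le {p : ℝ} (hp₀ : 0 < p) (hp₁ : p ≤ 1) (n : ℕ) :
    ∑ k ∈ Finset.range n, ((k : ℝ) + 1) ^ (p - 1) ≤ (n : ℝ) ^ p / p := by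
  rw [le_div_iff₀' hp₀, Finset.mul_sum]
  calc ∑ k ∈ Finset.range n, p * ((k : ℝ) + 1) ^ (p - 1)
      ≤ ∑ k ∈ Finset.range n, (((k + 1 : ℕ) : ℝ) ^ p - (k : ℝ) ^ p) := by
        gcongr with k
        exact_mod_cast mul_rpow_sub_one_le_rpow_sub_rpow hp₀.le hp₁ k.cast_nonneg
    _ = (n : ℝ) ^ p := by
        rw [Finset.sum_range_sub fun k : ℕ ↦ (k : ℝ) ^ p, Nat.cast_zero, Real.zero_rpow hp₀.ne',
          sub_zero]

theorem rpow_mul_sub_mul_one_sub_le {v α β : ℝ} (hv : 0 < v) (hαβ : α ≤ β) :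
    v ^ β * ((β - α) * (1 - v)) ≤ v ^ α - v ^ β := by
  have one_sub_le_neg_log : 1 - v ≤ -Real.log v := by linarith [Real.log_le_sub_one_of_pos hv]
  have factor : v ^ α = v ^ β * Real.exp ((β - α) * -Real.log v) := by
    rw [Real.rpow_def_of_pos hv, Real.rpow_def_of_pos hv, ← Real.exp_add]
    ring_nf
  calc v ^ β * ((β - α) * (1 - v)) ≤ v ^ β * ((β - α) * -Real.log v) := by
        have : 0 ≤ β - α := sub_nonneg.2 hαβ
        gcongr
    _ ≤ v ^ β * (Real.exp ((β - α) * -Real.log v) - 1) := by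
        gcongr
        linarith [Real.add_one_le_exp ((β - α) * -Real.log v)]
    _ = v ^ α - v ^ β := by rw [factor]; ring

theorem abs_sub_mul_one_sub_le_of_abs_rpow_add_rpow_sub_one_le {u v ε α β : ℝ} (hu : 0 < u)
    (huv : u ≤ v) (hv : v ≤ 1) (hε : ε ≤ 1 / 2) (hα₀ : 0 ≤ α) (hβ₀ : 0 ≤ β)
    (hα : |u ^ α + v ^ α - 1| ≤ ε) (hβ : |u ^ β + v ^ β - 1| ≤ ε) :
    |α - β| * (1 - v) ≤ 8 * ε := by
  wlog hαβ : α ≤ β generalizing α β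
  · rw [abs_sub_comm]
    exact this hβ₀ hα₀ hβ hα (le_of_not_ge hαβ)
  rw [abs_sub_comm, abs_of_nonneg (sub_nonneg.2 hαβ)]
  rw [abs_le] at hα hβ
  have quarter_le : 1 / 4 ≤ v ^ β := by linarith [Real.rpow_le_rpow hu.le huv hβ₀]
  have u_antitone : u ^ β ≤ u ^ α := Real.rpow_le_rpow_of_exponent_ge hu (huv.trans hv) hαβ
  have decrease : 1 / 4 * ((β - α) * (1 - v)) ≤ 2 * ε := calc
    1 / 4 * ((β - α) * (1 - v)) ≤ v ^ β * ((β - α) * (1 - v)) :=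
      mul_le_mul_of_nonneg_right quarter_le (mul_nonneg (sub_nonneg.2 hαβ) (sub_nonneg.2 hv))
    _ ≤ v ^ α - v ^ β := rpow_mul_sub_mul_one_sub_le (hu.trans_le huv) hαβ
    _ ≤ 2 * ε := by linarith
  linarith

theorem abs_div_rpow_add_div_rpow_sub_one {a b c : ℝ} (ha : 0 ≤ a) (hb : 0 ≤ b) (hc : 0 < c)
    (γ : ℝ) : |(a / c) ^ γ + (b / c) ^ γ - 1| = |a ^ γ + b ^ γ - c ^ γ| * c ^ (-γ) := by
  have hcγ : 0 < c ^ γ := Real.rpow_pos_of_pos hc γ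
  rw [Real.div_rpow ha hc.le, Real.div_rpow hb hc.le, Real.rpow_neg hc.le, ← div_eq_mul_inv,
    ← abs_of_pos hcγ, ← abs_div, abs_of_pos hcγ, sub_div, add_div, div_self hcγ.ne']

end RealPowers

section NearSums

/-- The exponents `α ≥ s` for which `a ^ α + b ^ α` lies within `2` of `c ^ α`. The ordering
`1 ≤ a ≤ b < c` is part of the membership condition, so that the set is empty for other triples. -/
def nearSumExponents (s : ℝ) (a b c : ℕ) : Set ℝ :=
  {α | s ≤ α ∧ 1 ≤ a ∧ a ≤ b ∧ b < c ∧ |(a : ℝ) ^ α + (b : ℝ) ^ α - (c : ℝ) ^ α| < 2}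

theorem abs_div_rpow_add_div_rpow_sub_one_le_of_mem_nearSumExponents {s α : ℝ} {a b c : ℕ}
    (hα : α ∈ nearSumExponents s a b c) :
    |((a : ℝ) / c) ^ α + ((b : ℝ) / c) ^ α - 1| ≤ 2 * (c : ℝ) ^ (-s) := by
  obtain ⟨hsα, -, -, hbc, hlt⟩ := hα
  have hc : (1 : ℝ) ≤ c := by exact_mod_cast (by lia : 1 ≤ c)
  rw [abs_div_rpow_add_div_rpow_sub_one a.cast_nonneg b.cast_nonneg (by linarith)]
  gcongr

theorem two_mul_rpow_neg_le_half {s c : ℝ} (hs : 2 ≤ s) (hc : 2 ≤ c) :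
    2 * c ^ (-s) ≤ 1 / 2 := by
  have : c ^ (-s) ≤ 1 / 4 := calc
    c ^ (-s) ≤ 2 ^ (-s) := Real.rpow_le_rpow_of_nonpos two_pos hc (by linarith)
    _ ≤ 2 ^ (-2 : ℝ) := Real.rpow_le_rpow_of_exponent_le one_le_two (by linarith)
    _ = 1 / 4 := by norm_num [Real.rpow_neg]
  linarith

theorem ediam_nearSumExponents_le {s : ℝ} (hs : 2 ≤ s) (a b c : ℕ) :
    Metric.ediam (nearSumExponents s a b c) ≤
      ENNReal.ofReal (16 * (c : ℝ) ^ (1 - s) / ((c : ℝ) - b)) := by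
  refine Metric.ediam_le fun α hα β hβ ↦ ?_
  rw [edist_dist, Real.dist_eq]
  apply ENNReal.ofReal_le_ofReal
  obtain ⟨ha, hab, hbc, -⟩ := hα.2
  have ha₀ : (0 : ℝ) < a := by exact_mod_cast ha
  have hab' : (a : ℝ) ≤ b := by exact_mod_cast hab
  have hbc' : (b : ℝ) < c := by exact_mod_cast hbc
  have hc₀ : (0 : ℝ) < c := by linarith
  have hc₂ : (2 : ℝ) ≤ c := by exact_mod_cast (by lia : 2 ≤ c)
  have key : |α - β| * (1 - (b : ℝ) / c) ≤ 8 * (2 * (c : ℝ) ^ (-s)) :=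
    abs_sub_mul_one_sub_le_of_abs_rpow_add_rpow_sub_one_le (by positivity) (by gcongr)
      ((div_le_one hc₀).2 hbc'.le) (two_mul_rpow_neg_le_half hs hc₂) (by linarith [hα.1])
      (by linarith [hβ.1]) (abs_div_rpow_add_div_rpow_sub_one_le_of_mem_nearSumExponents hα)
      (abs_div_rpow_add_div_rpow_sub_one_le_of_mem_nearSumExponents hβ)
  rw [le_div_iff₀ (sub_pos.2 hbc')]
  calc |α - β| * ((c : ℝ) - b) = c * (|α - β| * (1 - (b : ℝ) / c)) := by field_simp
    _ ≤ c * (8 * (2 * (c : ℝ) ^ (-s))) := by gcongr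
    _ = 16 * (c : ℝ) ^ (1 - s) := by
        rw [sub_eq_add_neg, Real.rpow_add hc₀, Real.rpow_one]
        ring

theorem sum_fin_sub_rpow_le {σ : ℝ} (hσ₀ : 0 ≤ σ) (hσ₁ : σ < 1) (c : ℕ) :
    ∑ b : Fin c, ((c : ℝ) - (b : ℕ)) ^ (-σ) ≤ (c : ℝ) ^ (1 - σ) / (1 - σ) := by
  rw [Fin.sum_univ_eq_sum_range fun b : ℕ ↦ ((c : ℝ) - b) ^ (-σ), ← Finset.sum_range_reflect]
  convert! sum_range_add_one_rpow_sub_one_le (sub_pos.2 hσ₁) (sub_le_self 1 hσ₀) c using 2 with k hk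
  rw [Finset.mem_range] at hk
  rw [Nat.cast_sub (by lia), Nat.cast_sub (by lia)]
  ring_nf

theorem sum_ediam_nearSumExponents_rpow_le {s σ : ℝ} (hs : 2 ≤ s) (hσ₀ : 0 ≤ σ) (hσ₁ : σ < 1)
    (c : ℕ) :
    ∑ p : Fin c × Fin c, Metric.ediam (nearSumExponents s p.1 p.2 c) ^ σ ≤
      ENNReal.ofReal (16 ^ σ / (1 - σ) * (c : ℝ) ^ (2 - s * σ)) := by
  rcases c.eq_zero_or_pos with rfl | hc
  · simp
  have hc₀ : (0 : ℝ) < c := by exact_mod_cast hc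
  have gap_pos (b : Fin c) : (0 : ℝ) < (c : ℝ) - (b : ℕ) := sub_pos.2 (by exact_mod_cast b.2)
  have split (b : Fin c) : (16 * (c : ℝ) ^ (1 - s) / ((c : ℝ) - (b : ℕ))) ^ σ =
      16 ^ σ * (c : ℝ) ^ ((1 - s) * σ) * ((c : ℝ) - (b : ℕ)) ^ (-σ) := by
    rw [Real.div_rpow (by positivity) (gap_pos b).le, Real.mul_rpow (by positivity) (by positivity),
      ← Real.rpow_mul hc₀.le, Real.rpow_neg (gap_pos b).le, div_eq_mul_inv]
  have term_nonneg (b : Fin c) : 0 ≤ (16 * (c : ℝ) ^ (1 - s) / ((c : ℝ) - (b : ℕ))) ^ σ :=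
    Real.rpow_nonneg (div_nonneg (by positivity) (gap_pos b).le) σ
  calc ∑ p : Fin c × Fin c, Metric.ediam (nearSumExponents s p.1 p.2 c) ^ σ
      ≤ ∑ p : Fin c × Fin c,
          ENNReal.ofReal ((16 * (c : ℝ) ^ (1 - s) / ((c : ℝ) - (p.2 : ℕ))) ^ σ) := by
        gcongr with p
        rw [← ENNReal.ofReal_rpow_of_nonneg (div_nonneg (by positivity) (gap_pos p.2).le) hσ₀]
        exact ENNReal.rpow_le_rpow (ediam_nearSumExponents_le hs _ _ _) hσ₀
    _ = ENNReal.ofReal (c * (16 ^ σ * (c : ℝ) ^ ((1 - s) * σ) *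
          ∑ b : Fin c, ((c : ℝ) - (b : ℕ)) ^ (-σ))) := by
        rw [← ENNReal.ofReal_sum_of_nonneg fun p _ ↦ term_nonneg p.2, Fintype.sum_prod_type]
        simp only [split, ← Finset.mul_sum, Finset.sum_const, Finset.card_univ, Fintype.card_fin,
          nsmul_eq_mul]
        rw [mul_left_comm]
    _ ≤ ENNReal.ofReal (c * (16 ^ σ * (c : ℝ) ^ ((1 - s) * σ) *
          ((c : ℝ) ^ (1 - σ) / (1 - σ)))) := by
        gcongr
        exact sum_fin_sub_rpow_le hσ₀ hσ₁ c
    _ = ENNReal.ofReal (16 ^ σ / (1 - σ) * (c : ℝ) ^ (2 - s * σ)) := by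
        have exponents : (2 : ℝ) - s * σ = 1 + (1 - s) * σ + (1 - σ) := by ring
        rw [exponents, Real.rpow_add hc₀, Real.rpow_add hc₀, Real.rpow_one]
        ring_nf

theorem tsum_ediam_nearSumExponents_rpow_ne_top {s σ : ℝ} (hs : 2 ≤ s) (hσ₀ : 0 ≤ σ)
    (hσ₁ : σ < 1) (hsσ : 3 < s * σ) :
    ∑' i : Σ c : ℕ, Fin c × Fin c, Metric.ediam (nearSumExponents s i.2.1 i.2.2 i.1) ^ σ ≠ ∞ := by
  have summable_bound : Summable fun c : ℕ ↦ 16 ^ σ / (1 - σ) * (c : ℝ) ^ (2 - s * σ) :=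
    (Real.summable_nat_rpow.2 (by linarith)).mul_left _
  refine ne_top_of_le_ne_top summable_bound.tsum_ofReal_ne_top ?_
  rw [ENNReal.tsum_sigma']
  gcongr with c
  rw [tsum_fintype]
  exact sum_ediam_nearSumExponents_rpow_le hs hσ₀ hσ₁ c

end NearSums

section Solutions

/-- The solutions `(x, y, z)` of `x + y = z` with all three entries in `S`. -/
def sumTriples (S : Set ℤ) : Set (ℤ × ℤ × ℤ) :=
  {T | T.1 ∈ S ∧ T.2.1 ∈ S ∧ T.2.2 ∈ S ∧ T.1 + T.2.1 = T.2.2}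

theorem abs_add_sub_lt_two_of_floor_add_floor_eq {x y z : ℝ} (h : ⌊x⌋ + ⌊y⌋ = ⌊z⌋) :
    |x + y - z| < 2 := by
  have h' : (⌊x⌋ : ℝ) + ⌊y⌋ = ⌊z⌋ := by exact_mod_cast h
  rw [abs_lt]
  constructor <;>
    linarith [Int.floor_le x, Int.floor_le y, Int.floor_le z, Int.lt_floor_add_one x,
      Int.lt_floor_add_one y, Int.lt_floor_add_one z]

theorem mem_nearSumExponents_of_floor_add_floor_eq {s α : ℝ} {a b c : ℕ} (hα₀ : 0 ≤ α)
    (hsα : s ≤ α) (ha : 1 ≤ a) (hab : a ≤ b)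
    (h : ⌊(a : ℝ) ^ α⌋ + ⌊(b : ℝ) ^ α⌋ = ⌊(c : ℝ) ^ α⌋) : α ∈ nearSumExponents s a b c := by
  refine ⟨hsα, ha, hab, ?_, abs_add_sub_lt_two_of_floor_add_floor_eq h⟩
  by_contra! hcb
  have floor_pos : 0 < ⌊(a : ℝ) ^ α⌋ :=
    Int.floor_pos.2 (Real.one_le_rpow (by exact_mod_cast ha) hα₀)
  have floor_le : ⌊(c : ℝ) ^ α⌋ ≤ ⌊(b : ℝ) ^ α⌋ := by gcongr
  lia

theorem infinite_setOf_mem_nearSumExponents {s α : ℝ} (hα₀ : 0 ≤ α) (hsα : s ≤ α)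
    (h : (sumTriples (PS α)).Infinite) :
    {i : Σ c : ℕ, Fin c × Fin c | α ∈ nearSumExponents s i.2.1 i.2.2 i.1}.Infinite := by
  let solution (i : Σ c : ℕ, Fin c × Fin c) : ℤ × ℤ × ℤ :=
    (⌊((i.2.1 : ℕ) : ℝ) ^ α⌋, ⌊((i.2.2 : ℕ) : ℝ) ^ α⌋, ⌊(i.1 : ℝ) ^ α⌋)
  let swapped (T : ℤ × ℤ × ℤ) : ℤ × ℤ × ℤ := (T.2.1, T.1, T.2.2)
  intro hfin
  refine h (((hfin.image solution).union ((hfin.image solution).image swapped)).subset ?_)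
  rintro ⟨-, -, -⟩ ⟨⟨a, ha, rfl⟩, ⟨b, hb, rfl⟩, ⟨c, -, rfl⟩, hsum⟩
  rcases le_total a b with hab | hba
  · have hmem := mem_nearSumExponents_of_floor_add_floor_eq hα₀ hsα ha hab hsum
    have hbc : b < c := hmem.2.2.2.1
    exact .inl ⟨⟨c, ⟨a, hab.trans_lt hbc⟩, ⟨b, hbc⟩⟩, hmem, rfl⟩
  · have hmem := mem_nearSumExponents_of_floor_add_floor_eq hα₀ hsα hb hba
      ((add_comm _ _).trans hsum)
    have hac : a < c := hmem.2.2.2.1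
    exact .inr ⟨_, ⟨⟨c, ⟨b, hba.trans_lt hac⟩, ⟨a, hac⟩⟩, hmem, rfl⟩, rfl⟩

theorem hausdorffMeasure_setOf_infinite_sumTriples_PS_eq_zero {s σ : ℝ} (hσ₀ : 0 < σ)
    (hσ₁ : σ < 1) (hsσ : 3 < s * σ) : μH[σ] {α ∈ Ici s | (sumTriples (PS α)).Infinite} = 0 := by
  have hs : 2 ≤ s := by nlinarith
  refine measure_mono_null ?_ (hausdorffMeasure_setOf_infinite_mem_eq_zero hσ₀
    (tsum_ediam_nearSumExponents_rpow_ne_top hs hσ₀.le hσ₁ hsσ))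
  rintro α ⟨hsα : s ≤ α, hα⟩
  exact infinite_setOf_mem_nearSumExponents (by linarith) hsα hα

end Solutions

theorem statement6_general (s : ℝ) (hs : 0 < s) :
    dimH {α ∈ Ici s | (sumTriples (PS α)).Infinite} ≤ ENNReal.ofReal (3 / s) := by
  by_contra! hlt
  obtain ⟨σ, hσ, hσ_lt_dimH⟩ := ENNReal.lt_iff_exists_nnreal_btwn.1 hlt
  have hσ₁ : (σ : ℝ) < 1 := by
    exact_mod_cast hσ_lt_dimH.trans_le ((dimH_mono (subset_univ _)).trans_eq Real.dimH_univ)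
  have hσ₃ : 3 / s < σ := by
    rwa [← ENNReal.ofReal_coe_nnreal, ENNReal.ofReal_lt_ofReal_iff_of_nonneg (by positivity)] at hσ
  have hσ₀ : (0 : ℝ) < σ := lt_trans (by positivity) hσ₃
  have null := hausdorffMeasure_setOf_infinite_sumTriples_PS_eq_zero hσ₀ hσ₁
    ((div_lt_iff₀' hs).1 hσ₃)
  exact ENNReal.zero_ne_top (null.symm.trans (hausdorffMeasure_of_lt_dimH hσ_lt_dimH))

/-- For `3 < s < t`, the Hausdorff dimension of
`A(s,t) = {α ∈ [s,t] : x + y = z has infinitely many solutions in PS(α)³}`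
is at most `3/s`. -/
theorem statement6 (s t : ℝ) (hs : 3 < s) (hst : s < t) :
    dimH {α ∈ Set.Icc s t |
      {T : ℤ × ℤ × ℤ | T.1 ∈ PS α ∧ T.2.1 ∈ PS α ∧ T.2.2 ∈ PS α ∧
        T.1 + T.2.1 = T.2.2}.Infinite} ≤ ENNReal.ofReal (3 / s) := by
  refine (dimH_mono ?_).trans (statement6_general s (by linarith))
  exact fun α hα ↦ ⟨hα.1.1, hα.2⟩
end
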